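/- arXiv:2001.00849 — 4 statements merged into one kernel-verified Lean document; each statement's English description precedes it below -/
import Mathlib

section
/- Let G be a finite simple graph with at least one edge and no isolated vertices, and let χ^+(G) be the maximum of the order chromatic number χ'_<(G^L) over all edge-orderings L of G. Then: χ^+(G) = 2 if G is a star forest or G is the path P_4 on four vertices; χ^+(K_3) = 3; and for every other such graph G, χ^+(G) = ∞. -/
/-- An edge-ordered graph: a finite simple graph on vertex set `Fin nv`
together with a labeling of (potential) edges.  The edge-order is the order of
the labels; the labeling is required to be injective on the edge set via
`EOGraph.Valid`. -/
structure EOGraph where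
  nv : ℕ
  graph : SimpleGraph (Fin nv)
  label : Sym2 (Fin nv) → ℕ

namespace EOGraph

/-- The labeling is injective on the edge set, hence defines a linear order on the edges. -/
def Valid (G : EOGraph) : Prop :=
  ∀ e ∈ G.graph.edgeSet, ∀ f ∈ G.graph.edgeSet, G.label e = G.label f → e = f

/-- The number of edges of an edge-ordered graph. -/
noncomputable def edges (G : EOGraph) : ℕ := G.graph.edgeSet.ncard

/-- `G.Contains H`: some subgraph of `G`, with the edge-order induced from `G`,
is isomorphic to `H` (via a graph isomorphism preserving the relative order of edges). -/
def Contains (G H : EOGraph) : Prop :=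
  ∃ f : Fin H.nv ↪ Fin G.nv,
    (∀ a b, H.graph.Adj a b → G.graph.Adj (f a) (f b)) ∧
    ∀ a b c d, H.graph.Adj a b → H.graph.Adj c d →
      (H.label s(a, b) < H.label s(c, d) ↔ G.label s(f a, f b) < G.label s(f c, f d))

/-- `G` avoids `H` if no subgraph of `G` (with the induced edge-order) is isomorphic to `H`. -/
def Avoids (G H : EOGraph) : Prop := ¬ G.Contains H

/-- `G` avoids a family if it avoids every member. -/
def AvoidsFam (G : EOGraph) (F : Set EOGraph) : Prop := ∀ H ∈ F, G.Avoids H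

/-- Isomorphism of edge-ordered graphs. -/
def Iso (G H : EOGraph) : Prop :=
  ∃ f : Fin G.nv ≃ Fin H.nv,
    (∀ a b, G.graph.Adj a b ↔ H.graph.Adj (f a) (f b)) ∧
    ∀ a b c d, G.graph.Adj a b → G.graph.Adj c d →
      (G.label s(a, b) < G.label s(c, d) ↔ H.label s(f a, f b) < H.label s(f c, f d))

end EOGraph

/-- A simple graph `G` can avoid the family `F` if some linear order on its edges
(given by a labeling injective on the edge set) makes it into an edge-ordered graph
avoiding `F`. -/
def CanAvoid {n : ℕ} (G : SimpleGraph (Fin n)) (F : Set EOGraph) : Prop :=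
  ∃ L : Sym2 (Fin n) → ℕ, (EOGraph.mk n G L).Valid ∧ (EOGraph.mk n G L).AvoidsFam F

/-- The order chromatic number of a family of edge-ordered graphs: the least chromatic
number of a finite simple graph that cannot avoid the family (`⊤` if every finite
simple graph can avoid it). -/
noncomputable def orderChrom (F : Set EOGraph) : ℕ∞ :=
  ⨅ (n : ℕ) (G : SimpleGraph (Fin n)) (_ : ¬ CanAvoid G F), G.chromaticNumber

/-- The Turán number `lex(n, F)`: the maximum number of edges of an edge-ordered graph
on `n` vertices avoiding the family `F`. -/
noncomputable def lexFam (n : ℕ) (F : Set EOGraph) : ℕ :=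
  sSup {m : ℕ | ∃ G : EOGraph, G.nv = n ∧ G.Valid ∧ G.AvoidsFam F ∧ G.edges = m}

/-- Build a symmetric labeling from a function of the (min, max) of the two endpoints. -/
def symLabel {N : ℕ} (f : Fin N → Fin N → ℕ) : Sym2 (Fin N) → ℕ :=
  Sym2.lift ⟨fun a b => f (min a b) (max a b), fun a b => by
    show f (min a b) (max a b) = f (min b a) (max b a)
    rw [min_comm, max_comm]⟩

/-- The edge-ordered path on `k` vertices `0, 1, …, k-1`, where the edge `{i, i+1}`
gets label `l[i]`. -/
def pathEO (k : ℕ) (l : List ℕ) : EOGraph where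
  nv := k
  graph := SimpleGraph.fromRel (fun a b => (a : ℕ) + 1 = (b : ℕ))
  label := symLabel fun a _ => l.getD (a : ℕ) 0

/-- `χ⁺(G)`: the maximum of the order chromatic number `χ'_<(G^L)` over all
edge-orderings `L` of `G`. -/
noncomputable def chiPlus {n : ℕ} (G : SimpleGraph (Fin n)) : ℕ∞ :=
  ⨆ (L : Sym2 (Fin n) → ℕ) (_ : (EOGraph.mk n G L).Valid),
    orderChrom {EOGraph.mk n G L}

/-- A star forest: a non-empty simple graph all of whose connected components are
stars, i.e. each connected component has a vertex contained in all of its edges. -/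
def IsStarForest {V : Type*} (G : SimpleGraph V) : Prop :=
  G.edgeSet.Nonempty ∧
    ∀ C : G.ConnectedComponent, ∃ c ∈ C.supp,
      ∀ e ∈ G.edgeSet, (∀ v ∈ e, v ∈ C.supp) → c ∈ e

open Filter

theorem EOGraph.contains_of_strict {n m : ℕ} (G : SimpleGraph (Fin n)) (L : Sym2 (Fin n) → ℕ)
    (H : SimpleGraph (Fin m)) (K : Sym2 (Fin m) → ℕ) (hL : (EOGraph.mk n G L).Valid)
    (f : Fin n → Fin m) (hf : Function.Injective f)
    (hadj : ∀ a b, G.Adj a b → H.Adj (f a) (f b))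
    (hlt : ∀ a b c d, G.Adj a b → G.Adj c d → L s(a, b) < L s(c, d) →
      K s(f a, f b) < K s(f c, f d)) :
    (EOGraph.mk m H K).Contains (EOGraph.mk n G L) := by
  refine ⟨⟨f, hf⟩, hadj, ?_⟩
  intro a b c d hab hcd
  refine ⟨hlt a b c d hab hcd, fun h => ?_⟩
  by_contra hcon
  rcases (not_lt.mp hcon).lt_or_eq with h1 | h1
  · exact lt_asymm h (hlt c d a b hcd hab h1)
  · have h2 : s(c, d) = s(a, b) := hL s(c, d) hcd s(a, b) hab h1
    have h3 : s(f c, f d) = s(f a, f b) := by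
      simpa using congrArg (Sym2.map f) h2
    change K s(f a, f b) < K s(f c, f d) at h
    rw [h3] at h
    exact lt_irrefl _ h

theorem exists_inj_label (n : ℕ) : ∃ e : Sym2 (Fin n) → ℕ, Function.Injective e := by
  obtain ⟨e⟩ := nonempty_embedding_nat (Sym2 (Fin n))
  exact ⟨e, e.injective⟩

theorem two_le_orderChrom {n : ℕ} (G : SimpleGraph (Fin n)) (L : Sym2 (Fin n) → ℕ)
    (hne : G.edgeSet.Nonempty) : 2 ≤ orderChrom {EOGraph.mk n G L} := by
  obtain ⟨e, he⟩ := hne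
  induction e with | _ a b => ?_
  refine le_iInf fun m => le_iInf fun H => le_iInf fun hH => ?_
  by_cases h : ∃ u v, H.Adj u v
  · obtain ⟨u, v, huv⟩ := h
    exact SimpleGraph.two_le_chromaticNumber_of_adj huv
  · exfalso
    push Not at h
    apply hH
    refine ⟨fun _ => 0, ?_, ?_⟩
    · intro e he
      induction e with | _ u v => exact absurd he (h u v)
    · rintro K rfl ⟨f, hf, -⟩
      exact h _ _ (hf a b he)

theorem chiPlus_eq_two {n : ℕ} (G : SimpleGraph (Fin n)) (hne : G.edgeSet.Nonempty)
    (h : ∀ L, (EOGraph.mk n G L).Valid → ∃ (m : ℕ) (H : SimpleGraph (Fin m)), H.Colorable 2 ∧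
      ∀ K, (EOGraph.mk m H K).Valid → (EOGraph.mk m H K).Contains (EOGraph.mk n G L)) :
    chiPlus G = 2 := by
  apply le_antisymm
  · refine iSup₂_le fun L hL => ?_
    obtain ⟨m, H, hc, hH⟩ := h L hL
    refine iInf_le_of_le m <| iInf_le_of_le H <| iInf_le_of_le ?_ ?_
    · rintro ⟨K, hK, hA⟩
      exact hA _ rfl (hH K hK)
    · exact_mod_cast hc.chromaticNumber_le
  · obtain ⟨e, he⟩ := exists_inj_label n
    exact le_iSup₂_of_le e (fun a _ b _ h => he h) (two_le_orderChrom G e hne)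

/-- Complete bipartite host: adjacency is difference of parity. -/
def parHost (n : ℕ) : SimpleGraph (Fin n) where
  Adj u v := (u : ℕ) % 2 ≠ (v : ℕ) % 2
  symm := ⟨fun _ _ h => h.symm⟩
  loopless := ⟨fun _ h => h rfl⟩

theorem parHost_colorable (n : ℕ) : (parHost n).Colorable 2 := by
  refine ⟨SimpleGraph.Coloring.mk (fun u => (⟨(u : ℕ) % 2, Nat.mod_lt _ (by norm_num)⟩ : Fin 2)) ?_⟩
  intro u v h h2
  exact h (by simpa using h2)

theorem tri_sort (K : Sym2 (Fin 3) → ℕ)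
    (hK : ∀ e f : Sym2 (Fin 3), ¬ e.IsDiag → ¬ f.IsDiag → K e = K f → e = f) :
    ∃ σ : Equiv.Perm (Fin 3), K s(σ 0, σ 1) < K s(σ 0, σ 2) ∧ K s(σ 0, σ 2) < K s(σ 1, σ 2) := by
  have h1 : K s(0, 1) ≠ K s(0, 2) := fun h => absurd (hK _ _ (by decide) (by decide) h) (by decide)
  have h2 : K s(0, 1) ≠ K s(1, 2) := fun h => absurd (hK _ _ (by decide) (by decide) h) (by decide)
  have h3 : K s(0, 2) ≠ K s(1, 2) := fun h => absurd (hK _ _ (by decide) (by decide) h) (by decide)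
  have key : ∀ i j k : Fin 3, i ≠ j → i ≠ k → j ≠ k → K s(i, j) < K s(i, k) → K s(i, k) < K s(j, k) →
      ∃ σ : Equiv.Perm (Fin 3),
        K s(σ 0, σ 1) < K s(σ 0, σ 2) ∧ K s(σ 0, σ 2) < K s(σ 1, σ 2) := by
    intro i j k hij hik hjk a b
    have hinj : Function.Injective ![i, j, k] := by
      intro x y h
      fin_cases x <;> fin_cases y <;> simp_all
    exact ⟨Equiv.ofBijective _ (Finite.injective_iff_bijective.mp hinj), by simpa using a,
      by simpa using b⟩
  have e1 : K s(1, 0) = K s(0, 1) := congrArg K Sym2.eq_swap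
  have e2 : K s(2, 0) = K s(0, 2) := congrArg K Sym2.eq_swap
  have e3 : K s(2, 1) = K s(1, 2) := congrArg K Sym2.eq_swap
  rcases h1.lt_or_gt with a | a <;> rcases h2.lt_or_gt with b | b <;>
    rcases h3.lt_or_gt with c | c
  · exact key 0 1 2 (by decide) (by decide) (by decide) (by omega) (by omega)
  · exact key 1 0 2 (by decide) (by decide) (by decide) (by omega) (by omega)
  · omega
  · exact key 1 2 0 (by decide) (by decide) (by decide) (by omega) (by omega)
  · exact key 0 2 1 (by decide) (by decide) (by decide) (by omega) (by omega)
  · omega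
  · exact key 2 0 1 (by decide) (by decide) (by decide) (by omega) (by omega)
  · exact key 2 1 0 (by decide) (by decide) (by decide) (by omega) (by omega)

theorem chiPlus_K3 {n : ℕ} (G : SimpleGraph (Fin n))
    (φ : G ≃g (⊤ : SimpleGraph (Fin 3))) : chiPlus G = 3 := by
  have hall : ∀ a b, G.Adj a b ↔ a ≠ b := fun a b => by
    rw [← φ.map_adj_iff]; simp
  apply le_antisymm
  · refine iSup₂_le fun L hL => ?_
    refine iInf_le_of_le 3 <| iInf_le_of_le ⊤ <| iInf_le_of_le ?_ ?_
    · rintro ⟨K, hK, hA⟩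
      refine hA _ rfl ?_
      obtain ⟨σ, s1, s2⟩ := tri_sort (fun e => L (Sym2.map φ.symm e)) (fun e f he hf h => by
        have := hL _ (by
          induction e with | _ a b =>
          simpa [hall] using he) _ (by
          induction f with | _ a b =>
          simpa [hall] using hf) h
        exact Sym2.map.injective φ.symm.injective this)
      obtain ⟨τ, t1, t2⟩ := tri_sort K (fun e f he hf h => hK e (by
          induction e with | _ a b =>
          simpa using he) f (by
          induction f with | _ a b =>
          simpa using hf) h)
      refine EOGraph.contains_of_strict G L ⊤ K hL (fun v => τ (σ.symm (φ v)))
        (τ.injective.comp (σ.symm.injective.comp φ.injective)) ?_ ?_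
      · intro a b h
        simpa using h.ne
      · intro a b c d hab hcd
        obtain ⟨i, rfl⟩ : ∃ i, φ.symm (σ i) = a := ⟨σ.symm (φ a), by simp⟩
        obtain ⟨j, rfl⟩ : ∃ i, φ.symm (σ i) = b := ⟨σ.symm (φ b), by simp⟩
        obtain ⟨k, rfl⟩ : ∃ i, φ.symm (σ i) = c := ⟨σ.symm (φ c), by simp⟩
        obtain ⟨l, rfl⟩ : ∃ i, φ.symm (σ i) = d := ⟨σ.symm (φ d), by simp⟩
        simp only [hall, ne_eq, EmbeddingLike.apply_eq_iff_eq] at hab hcd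
        simp only [Sym2.map_mk] at s1 s2
        simp only [RelIso.apply_symm_apply, Equiv.symm_apply_apply]
        have hs := fun x y => congrArg L (Sym2.eq_swap (a := φ.symm (σ x)) (b := φ.symm (σ y)))
        have ht := fun x y => congrArg K (Sym2.eq_swap (a := τ x) (b := τ y))
        have h1 := hs 1 0
        have h2 := hs 2 0
        have h3 := hs 2 1
        have k1 := ht 1 0
        have k2 := ht 2 0
        have k3 := ht 2 1
        clear hs ht
        fin_cases i <;> fin_cases j <;> first | exact absurd rfl hab | skip
        all_goals fin_cases k <;> fin_cases l <;> first | exact absurd rfl hcd | skip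
        all_goals
          simp only [Fin.zero_eta, Fin.mk_one, Fin.reduceFinMk]
          omega
    · simp [SimpleGraph.chromaticNumber_top]
  · obtain ⟨e, he⟩ := exists_inj_label n
    refine le_iSup₂_of_le e (fun a _ b _ h => he h) ?_
    refine le_iInf fun m => le_iInf fun H => le_iInf fun hH => ?_
    by_contra hlt
    apply hH
    have hc : H.Colorable 2 := by
      rw [← SimpleGraph.chromaticNumber_le_iff_colorable]
      rw [not_le] at hlt
      exact Order.le_of_lt_add_one (by exact_mod_cast hlt)
    obtain ⟨C⟩ := hc
    obtain ⟨K, hK⟩ := exists_inj_label m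
    refine ⟨K, fun a _ b _ h => hK h, ?_⟩
    rintro _ rfl ⟨f, hf, -⟩
    have h01 := C.valid (hf (φ.symm 0) (φ.symm 1) ((hall _ _).2 (by simp)))
    have h02 := C.valid (hf (φ.symm 0) (φ.symm 2) ((hall _ _).2 (by simp)))
    have h12 := C.valid (hf (φ.symm 1) (φ.symm 2) ((hall _ _).2 (by simp)))
    revert h01 h02 h12
    generalize C (f (φ.symm 0)) = p
    generalize C (f (φ.symm 1)) = q
    generalize C (f (φ.symm 2)) = r
    revert p q r
    decide

section core
variable {α : Type*} [LinearOrder α]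

/-- `rowLT x a a'`: for most columns `b`, for most columns `b'`, `x a b < x a' b'`. -/
def rowLT (x : ℕ → ℕ → α) (a a' : ℕ) : Prop :=
  ∀ᶠ b in (hyperfilter ℕ : Filter ℕ), ∀ᶠ b' in (hyperfilter ℕ : Filter ℕ), x a b < x a' b'

theorem hyper_ne (b : ℕ) : ∀ᶠ b' in (hyperfilter ℕ : Filter ℕ), b ≠ b' := by
  have : ({b}ᶜ : Set ℕ) ∈ hyperfilter ℕ := (Set.finite_singleton b).compl_mem_hyperfilter
  filter_upwards [this] with c hc h
  exact hc h.symm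

theorem not_rowLT {x : ℕ → ℕ → α} (hx : ∀ a b a' b', x a b = x a' b' → a = a' ∧ b = b')
    {a a' : ℕ} (h : ¬ rowLT x a a') :
    ∀ᶠ b in (hyperfilter ℕ : Filter ℕ), ∀ᶠ b' in (hyperfilter ℕ : Filter ℕ), x a' b' < x a b := by
  rw [rowLT, ← Ultrafilter.eventually_not] at h
  filter_upwards [h] with b hb
  rw [← Ultrafilter.eventually_not] at hb
  filter_upwards [hb, hyper_ne b] with b' h1 h2
  refine lt_of_le_of_ne (not_lt.mp h1) fun h3 => ?_
  exact h2 (hx _ _ _ _ h3).2.symm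

theorem rowLT_trans {x : ℕ → ℕ → α} {a b c : ℕ} (h1 : rowLT x a b) (h2 : rowLT x b c) :
    rowLT x a c := by
  filter_upwards [h1] with p hp
  obtain ⟨q, hq, hq2⟩ := (hp.and h2).exists
  filter_upwards [hq2] with r hr
  exact hq.trans hr

theorem exists_hyper_seq (C : ℕ → ℕ → Prop)
    (h : ∀ᶠ b in (hyperfilter ℕ : Filter ℕ), ∀ᶠ b' in (hyperfilter ℕ : Filter ℕ), C b b') :
    ∃ w : ℕ → ℕ, ∀ m n, m < n → w m ≠ w n ∧ C (w m) (w n) := by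
  obtain ⟨w, -, hw⟩ := exists_seq_of_forall_finset_exists
    (fun b => ∀ᶠ b' in (hyperfilter ℕ : Filter ℕ), C b b') (fun b b' => b ≠ b' ∧ C b b') (by
      intro s hs
      have h1 : ∀ᶠ y in (hyperfilter ℕ : Filter ℕ), ∀ x ∈ s, x ≠ y ∧ C x y := by
        rw [Filter.eventually_all_finset]
        exact fun x hx => (hyper_ne x).and (hs x hx)
      exact (h.and h1).exists)
  exact ⟨w, hw⟩

/-- The universal structure inside an infinite ordered matrix. -/
theorem core_matrix (x : ℕ → ℕ → α) (hx : ∀ a b a' b', x a b = x a' b' → a = a' ∧ b = b')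
    (k q : ℕ) :
    (∃ c w : ℕ → ℕ, Function.Injective c ∧ (∀ j j', j < j' → j' < q → w j ≠ w j') ∧
      ∀ i i' j j', i < k → i' < k → j < j' → j' < q → x (c i) (w j) < x (c i') (w j')) ∨
    (∃ c w : ℕ → ℕ, Function.Injective c ∧ (∀ j j', j < j' → j' < q → w j ≠ w j') ∧
      ∀ i i' j j', i < k → i' < k → j < j' → j' < q → x (w j) (c i) < x (w j') (c i')) := by
  have injof : ∀ w : ℕ → ℕ, (∀ m n, m < n → w m ≠ w n) → Function.Injective w := by
    intro w hw m n h
    rcases lt_trichotomy m n with h1 | h1 | h1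
    · exact absurd h (hw _ _ h1)
    · exact h1
    · exact absurd h.symm (hw _ _ h1)
  -- the chain case
  have chain : ∀ a : ℕ → ℕ, (∀ j j', j < j' → j' < q → a j ≠ a j') →
      (∀ j j', j < j' → j' < q → rowLT x (a j) (a j') ∧ ¬ rowLT x (a j') (a j)) →
      ∃ c w : ℕ → ℕ, Function.Injective c ∧ (∀ j j', j < j' → j' < q → w j ≠ w j') ∧
      ∀ i i' j j', i < k → i' < k → j < j' → j' < q → x (w j) (c i) < x (w j') (c i') := by
    intro a ha hch
    have hC : ∀ᶠ b in (hyperfilter ℕ : Filter ℕ), ∀ᶠ b' in (hyperfilter ℕ : Filter ℕ),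
        ∀ j' ∈ Finset.range q, ∀ j ∈ Finset.range j', x (a j) b < x (a j') b ∧
          x (a j) b < x (a j') b' ∧ x (a j) b' < x (a j') b := by
      simp only [Filter.eventually_all_finset]
      intro j' hj' j hj
      rw [Finset.mem_range] at hj hj'
      obtain ⟨h1, h2⟩ := hch j j' hj hj'
      have h3 := not_rowLT hx h2
      have h4 : ∀ᶠ b in (hyperfilter ℕ : Filter ℕ), x (a j) b < x (a j') b := by
        by_contra hcon
        rw [← Ultrafilter.eventually_not] at hcon
        obtain ⟨b, ⟨hb, hb2⟩, hb3⟩ := ((Filter.Eventually.and h1 h3).and hcon).exists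
        obtain ⟨b', ⟨h5, h6⟩, h7⟩ := ((hb.and hb2).and hcon).exists
        exact lt_irrefl _ (((h5.trans_le (not_lt.mp h7)).trans h6).trans_le (not_lt.mp hb3))
      filter_upwards [h1, h3, h4] with b h1 h3 h4
      filter_upwards [h1, h3] with b' h1 h3
      exact ⟨h4, h1, h3⟩
    obtain ⟨c, hc⟩ := exists_hyper_seq _ hC
    refine ⟨c, a, injof c fun m n h => (hc m n h).1, ha, ?_⟩
    intro i i' j j' _ _ hj hj'
    rcases lt_trichotomy i i' with h | rfl | h
    · exact ((hc _ _ h).2 j' (by simpa using hj') j (by simpa using hj)).2.1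
    · exact ((hc i (i + 1) (by omega)).2 j' (by simpa using hj') j (by simpa using hj)).1
    · exact ((hc _ _ h).2 j' (by simpa using hj') j (by simpa using hj)).2.2
  have : IsTrans ℕ (rowLT x) := ⟨fun _ _ _ => rowLT_trans⟩
  have : IsTrans ℕ (fun a b => rowLT x b a) := ⟨fun _ _ _ h1 h2 => rowLT_trans h2 h1⟩
  obtain ⟨g, hg⟩ := exists_increasing_or_nonincreasing_subseq (rowLT x) id
  obtain ⟨g', hg'⟩ := exists_increasing_or_nonincreasing_subseq (fun a b => rowLT x b a) g
  set a : ℕ → ℕ := fun n => g (g' n) with ha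
  have hainj : Function.Injective a := g.injective.comp g'.injective
  have hg2 : (∀ m n, m < n → rowLT x (a m) (a n)) ∨ (∀ m n, m < n → ¬ rowLT x (a m) (a n)) := by
    rcases hg with h | h
    · exact Or.inl fun m n hmn => h _ _ (g'.strictMono hmn)
    · exact Or.inr fun m n hmn => h _ _ (g'.strictMono hmn)
  change (∀ m n, m < n → rowLT x (a n) (a m)) ∨ (∀ m n, m < n → ¬ rowLT x (a n) (a m)) at hg'
  rcases hg2 with h | h <;> rcases hg' with h' | h'
  · left
    have hall : ∀ m n, rowLT x (a m) (a n) := by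
      intro m n
      rcases lt_trichotomy m n with h1 | rfl | h1
      · exact h _ _ h1
      · exact rowLT_trans (h m (m + 1) (by omega)) (h' m (m + 1) (by omega))
      · exact h' _ _ h1
    obtain ⟨w, hw⟩ := exists_hyper_seq
      (fun b b' => ∀ i ∈ Finset.range k, ∀ i' ∈ Finset.range k, x (a i) b < x (a i') b') (by
        simp only [Filter.eventually_all_finset]
        exact fun i _ i' _ => hall i i')
    exact ⟨a, w, hainj, fun j j' h _ => (hw j j' h).1, fun i i' j j' hi hi' hj _ =>
      (hw j j' hj).2 i (by simpa using hi) i' (by simpa using hi')⟩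
  · right
    exact chain a (fun j j' h _ h2 => h.ne (hainj h2)) fun j j' hj _ => ⟨h j j' hj, h' j j' hj⟩
  · right
    refine chain (fun j => a (q - 1 - j)) (fun j j' h h1 h2 => ?_) fun j j' hj hq => ⟨?_, ?_⟩
    · have := hainj h2
      omega
    · exact h' _ _ (by omega)
    · exact h _ _ (by omega)
  · left
    have hall : ∀ m n, ∀ᶠ b in (hyperfilter ℕ : Filter ℕ), ∀ᶠ b' in (hyperfilter ℕ : Filter ℕ),
        x (a n) b' < x (a m) b := by
      intro m n
      rcases lt_trichotomy m n with h1 | rfl | h1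
      · exact not_rowLT hx (h _ _ h1)
      · have h2 := not_rowLT hx (h m (m + 1) (by omega))
        have h3 := not_rowLT hx (h' m (m + 1) (by omega))
        filter_upwards [h2] with b hb
        obtain ⟨d, hd, hd2⟩ := (hb.and h3).exists
        filter_upwards [hd2] with b' hb'
        exact hb'.trans hd
      · exact not_rowLT hx (h' _ _ h1)
    obtain ⟨w, hw⟩ := exists_hyper_seq
      (fun b b' => ∀ i ∈ Finset.range k, ∀ i' ∈ Finset.range k, x (a i') b' < x (a i) b) (by
        simp only [Filter.eventually_all_finset]
        exact fun i _ i' _ => hall i i')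
    refine ⟨a, fun j => w (q - 1 - j), hainj, fun j j' h h1 => ?_, fun i i' j j' hi hi' hj hj' => ?_⟩
    · exact ((hw (q - 1 - j') (q - 1 - j) (by omega)).1).symm
    · exact (hw (q - 1 - j') (q - 1 - j) (by omega)).2 i' (by simpa using hi') i (by simpa using hi)

end core

/-- A non-star-forest has a three-edge walk with middle edge non-pendant at both ends. -/
theorem exists_p4_of_not_starForest {V : Type*} (G : SimpleGraph V) (hne : G.edgeSet.Nonempty)
    (h : ¬ IsStarForest G) :
    ∃ x u v y, G.Adj u v ∧ G.Adj u x ∧ x ≠ v ∧ G.Adj v y ∧ y ≠ u := by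
  by_contra hcon
  apply h
  refine ⟨hne, fun C => ?_⟩
  have key : ∃ c ∈ C.supp, ∀ w, G.Adj c w → ∀ z, G.Adj w z → z = c := by
    obtain ⟨c0, hc0⟩ := C.nonempty_supp
    by_cases h0 : ∀ w, G.Adj c0 w → ∀ z, G.Adj w z → z = c0
    · exact ⟨c0, hc0, h0⟩
    · push Not at h0
      obtain ⟨w, hw, z, hz, hzc⟩ := h0
      refine ⟨w, C.mem_supp_of_adj_mem_supp hc0 hw, fun p hp r hr => ?_⟩
      by_contra hrw
      by_cases hpz : p = z
      · exact hcon ⟨c0, w, p, r, hp, hw.symm, by rw [hpz]; exact hzc.symm, hr, hrw⟩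
      · exact hcon ⟨z, w, p, r, hp, hz, Ne.symm hpz, hr, hrw⟩
  obtain ⟨c, hc, hk⟩ := key
  refine ⟨c, hc, ?_⟩
  have hreach : ∀ a, G.Reachable c a → a = c ∨ G.Adj c a := by
    intro a ha
    rw [SimpleGraph.reachable_iff_reflTransGen] at ha
    induction ha with
    | refl => exact Or.inl rfl
    | tail _ hbc ih =>
      rcases ih with rfl | ih
      · exact Or.inr hbc
      · exact Or.inl (hk _ ih _ hbc)
  intro e he hmem
  induction e with | _ a b => ?_
  have ha : G.Reachable c a := by
    have h1 := hmem a (Sym2.mem_mk_left a b)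
    rw [SimpleGraph.ConnectedComponent.mem_supp_iff] at h1 hc
    exact SimpleGraph.ConnectedComponent.eq.mp (hc.trans h1.symm)
  rcases hreach a ha with rfl | h1
  · exact Sym2.mem_mk_left _ _
  · rw [← hk a h1 b he]
    exact Sym2.mem_mk_right _ _

/-- The min-labeling of a complete graph. -/
def minLab (n : ℕ) : Sym2 (Fin n) → ℕ := symLabel fun a b => (a : ℕ) * n + b

theorem minLab_le {n : ℕ} {a b c d : Fin n} (h : minLab n s(a, b) ≤ minLab n s(c, d)) :
    min a b ≤ min c d := by
  change ((min a b : Fin n) : ℕ) * n + (max a b : Fin n) ≤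
    ((min c d : Fin n) : ℕ) * n + (max c d : Fin n) at h
  by_contra hlt
  rw [not_le, Fin.lt_def] at hlt
  have h1 := (max c d).isLt
  generalize ((min a b : Fin n) : ℕ) = A at *
  generalize ((min c d : Fin n) : ℕ) = B at *
  have h2 : (B + 1) * n ≤ A * n := Nat.mul_le_mul_right n hlt
  rw [Nat.add_mul] at h2
  omega

theorem minLab_inj {n : ℕ} : Function.Injective (minLab n) := by
  intro e f
  induction e with | _ a b => ?_
  induction f with | _ c d => ?_
  intro h
  have h1 : min a b = min c d := le_antisymm (minLab_le h.le) (minLab_le h.ge)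
  change ((min a b : Fin n) : ℕ) * n + (max a b : Fin n) =
    ((min c d : Fin n) : ℕ) * n + (max c d : Fin n) at h
  rw [h1] at h
  have h2 : max a b = max c d := Fin.ext (by omega)
  rcases le_total a b with h3 | h3 <;> rcases le_total c d with h4 | h4 <;>
    simp_all

/-- Four edges suitably ordered cannot be embedded in the min-labeling. -/
theorem chiPlus_top_aux {N : ℕ} (G : SimpleGraph (Fin N)) (x u v y p q : Fin N)
    (huv : G.Adj u v) (hux : G.Adj u x) (hxv : x ≠ v) (hvy : G.Adj v y) (hyu : y ≠ u)
    (hpq : G.Adj p q) (h1 : s(p, q) ≠ s(u, x)) (h2 : s(p, q) ≠ s(u, v)) (h3 : s(p, q) ≠ s(v, y))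
    (hv : v ∉ s(p, q)) : chiPlus G = ⊤ := by
  classical
  obtain ⟨e, he⟩ := exists_inj_label N
  let L : Sym2 (Fin N) → ℕ := fun f => if f = s(u, v) then 0 else if f = s(p, q) then 1 else
    if f = s(v, y) then 2 else if f = s(u, x) then 3 else 4 + e f
  have hLinj : Function.Injective L := by
    intro a b hab
    simp only [L] at hab
    split_ifs at hab <;> first | omega | (subst_vars; rfl) | exact he (by omega)
  have n1 : s(v, y) ≠ s(u, v) := by
    intro h; rw [Sym2.eq_swap, Sym2.congr_left] at h; exact hyu h
  have n2 : s(u, x) ≠ s(u, v) := by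
    intro h; rw [Sym2.congr_right] at h; exact hxv h
  have n3 : s(u, x) ≠ s(v, y) := by
    intro h; rw [Sym2.eq_iff] at h
    rcases h with h | h
    · exact huv.ne h.1
    · exact hyu h.1.symm
  have l1 : L s(u, v) = 0 := if_pos rfl
  have l2 : L s(p, q) = 1 := (if_neg h2).trans (if_pos rfl)
  have l3 : L s(v, y) = 2 := (if_neg n1).trans ((if_neg h3.symm).trans (if_pos rfl))
  have l4 : L s(u, x) = 3 := (if_neg n2).trans ((if_neg h1.symm).trans ((if_neg n3).trans (if_pos rfl)))
  rw [eq_top_iff]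
  refine le_iSup₂_of_le L (fun a _ b _ h => hLinj h) ?_
  refine le_iInf fun n => le_iInf fun H => le_iInf fun hH => ?_
  exfalso
  apply hH
  refine ⟨minLab n, fun a _ b _ h => minLab_inj h, ?_⟩
  rintro _ rfl ⟨f, -, hf⟩
  have m : ∀ a b c d, G.Adj a b → G.Adj c d → L s(a, b) < L s(c, d) →
      min (f a) (f b) ≤ min (f c) (f d) := fun a b c d hab hcd h =>
    minLab_le ((hf a b c d hab hcd).1 h).le
  have m1 := m u v p q huv hpq (by omega)
  have m2 := m p q v y hpq hvy (by omega)
  have m3 := m v y u x hvy hux (by omega)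
  have hv' : v ≠ p ∧ v ≠ q := by simpa using hv
  have f1 : f v ≠ f p := fun h => hv'.1 (f.injective h)
  have f2 : f v ≠ f q := fun h => hv'.2 (f.injective h)
  have f3 : f y ≠ f u := fun h => hyu (f.injective h)
  have f4 : f v ≠ f u := fun h => huv.ne' (f.injective h)
  clear hf m
  grind

theorem chiPlus_top {N : ℕ} (G : SimpleGraph (Fin N))
    (hne : G.edgeSet.Nonempty) (hiso : ∀ v, ∃ w, G.Adj v w) (h1 : ¬ IsStarForest G)
    (h2 : ¬ Nonempty (G ≃g SimpleGraph.pathGraph 4))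
    (h3 : ¬ Nonempty (G ≃g (⊤ : SimpleGraph (Fin 3)))) : chiPlus G = ⊤ := by
  obtain ⟨x, u, v, y, huv, hux, hxv, hvy, hyu⟩ := exists_p4_of_not_starForest G hne h1
  by_cases h4 : ∃ p q, G.Adj p q ∧ s(p, q) ≠ s(u, x) ∧ s(p, q) ≠ s(u, v) ∧ s(p, q) ≠ s(v, y)
  · obtain ⟨p, q, hpq, g1, g2, g3⟩ := h4
    by_cases hv : v ∈ s(p, q)
    · have hu : u ∉ s(p, q) := fun hu => g2 (((Sym2.mem_and_mem_iff huv.ne).1 ⟨hu, hv⟩))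
      exact chiPlus_top_aux G y v u x p q huv.symm hvy hyu hux hxv hpq g3
        (by rwa [Sym2.eq_swap (a := v)]) g1 hu
    · exact chiPlus_top_aux G x u v y p q huv hux hxv hvy hyu hpq g1 g2 g3 hv
  · exfalso
    have hadj : ∀ p q, G.Adj p q ↔ (s(p, q) = s(u, x) ∨ s(p, q) = s(u, v) ∨ s(p, q) = s(v, y)) := by
      intro p q
      constructor
      · intro h
        by_contra hcon
        push Not at hcon
        exact h4 ⟨p, q, h, hcon⟩
      · intro h
        simp only [← SimpleGraph.mem_edgeSet]
        rcases h with h | h | h <;> rw [h] <;> assumption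
    have hcov : ∀ z, z = x ∨ z = u ∨ z = v ∨ z = y := by
      intro z
      obtain ⟨w, hw⟩ := hiso z
      rw [hadj] at hw
      simp only [Sym2.eq_iff] at hw
      tauto
    simp only [Sym2.eq_iff] at hadj
    have a1 := huv.ne
    have a2 := hux.ne
    have a3 := hvy.ne
    by_cases hxy : x = y
    · subst hxy
      apply h3
      clear h1 h2 h3 h4 hiso hne huv hux hvy
      have hb : Function.Bijective ![x, u, v] := by
        constructor
        · clear hadj hcov
          intro i j hij
          fin_cases i <;> fin_cases j <;> first | rfl | (exfalso; revert hij; simp; tauto)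
        · intro z
          rcases hcov z with rfl | rfl | rfl | rfl
          exacts [⟨0, rfl⟩, ⟨1, rfl⟩, ⟨2, rfl⟩, ⟨0, rfl⟩]
      refine ⟨(RelIso.symm ⟨Equiv.ofBijective _ hb, ?_⟩)⟩
      intro i j
      simp only [Equiv.ofBijective_apply, hadj, SimpleGraph.top_adj]
      clear hb hadj hcov
      have b1 := a1.symm
      have b2 := a2.symm
      have b3 := a3.symm
      fin_cases i <;> fin_cases j <;> simp [a1, a2, a3, b1, b2, b3]
    · apply h2
      clear h1 h2 h3 h4 hiso hne huv hux hvy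
      have hb : Function.Bijective ![x, u, v, y] := by
        constructor
        · clear hadj hcov
          intro i j hij
          fin_cases i <;> fin_cases j <;> first | rfl | (exfalso; revert hij; simp; tauto)
        · intro z
          rcases hcov z with rfl | rfl | rfl | rfl
          exacts [⟨0, rfl⟩, ⟨1, rfl⟩, ⟨2, rfl⟩, ⟨3, rfl⟩]
      refine ⟨(RelIso.symm ⟨Equiv.ofBijective _ hb, ?_⟩)⟩
      intro i j
      simp only [Equiv.ofBijective_apply, hadj, SimpleGraph.pathGraph_adj]
      clear hb hadj hcov
      have b1 := a1.symm
      have b2 := a2.symm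
      have b3 := a3.symm
      have b4 := hxv.symm
      have b5 := hyu.symm
      have b6 : y ≠ x := Ne.symm hxy
      fin_cases i <;> fin_cases j <;> simp [a1, a2, a3, b1, b2, b3, b4, b5, b6, hxv, hyu, hxy]

theorem p4_contains {n : ℕ} (G : SimpleGraph (Fin n)) (L : Sym2 (Fin n) → ℕ)
    (hL : (EOGraph.mk n G L).Valid) (φ : G ≃g SimpleGraph.pathGraph 4) {m : ℕ}
    (H : SimpleGraph (Fin m)) (K : Sym2 (Fin m) → ℕ) (p : Fin 4 → Fin m)
    (hp : Function.Injective p)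
    (hadj : ∀ t : Fin 3, H.Adj (p t.castSucc) (p t.succ))
    (hlt : ∀ t t' : Fin 3, L s(φ.symm t.castSucc, φ.symm t.succ) <
      L s(φ.symm t'.castSucc, φ.symm t'.succ) →
      K s(p t.castSucc, p t.succ) < K s(p t'.castSucc, p t'.succ)) :
    (EOGraph.mk m H K).Contains (EOGraph.mk n G L) := by
  have key : ∀ a b, G.Adj a b → ∃ t : Fin 3, s(a, b) = s(φ.symm t.castSucc, φ.symm t.succ) ∧
      s(p (φ a), p (φ b)) = s(p t.castSucc, p t.succ) := by
    intro a b hab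
    obtain ⟨i, rfl⟩ : ∃ i, φ.symm i = a := ⟨φ a, by simp⟩
    obtain ⟨j, rfl⟩ : ∃ i, φ.symm i = b := ⟨φ b, by simp⟩
    rw [φ.symm.map_adj_iff, SimpleGraph.pathGraph_adj] at hab
    simp only [RelIso.apply_symm_apply]
    rcases hab with h | h
    · refine ⟨⟨i, by omega⟩, ?_⟩
      have h1 : (⟨i, by omega⟩ : Fin 3).castSucc = i := rfl
      have h2 : (⟨i, by omega⟩ : Fin 3).succ = j := Fin.ext h
      rw [h1, h2]
      exact ⟨rfl, rfl⟩
    · refine ⟨⟨j, by omega⟩, ?_⟩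
      have h1 : (⟨j, by omega⟩ : Fin 3).castSucc = j := rfl
      have h2 : (⟨j, by omega⟩ : Fin 3).succ = i := Fin.ext h
      rw [h1, h2]
      exact ⟨Sym2.eq_swap, Sym2.eq_swap⟩
  refine EOGraph.contains_of_strict G L H K hL (fun v => p (φ v)) (hp.comp φ.injective) ?_ ?_
  · intro a b hab
    obtain ⟨t, -, ht⟩ := key a b hab
    rw [← SimpleGraph.mem_edgeSet, ht]
    exact hadj t
  · intro a b c d hab hcd h
    obtain ⟨t, ht1, ht⟩ := key a b hab
    obtain ⟨t', ht1', ht'⟩ := key c d hcd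
    rw [ht, ht']
    rw [ht1, ht1'] at h
    exact hlt t t' h

theorem p4_contains' {n : ℕ} (G : SimpleGraph (Fin n)) (L : Sym2 (Fin n) → ℕ)
    (hL : (EOGraph.mk n G L).Valid) (φ : G ≃g SimpleGraph.pathGraph 4) {m : ℕ}
    (H : SimpleGraph (Fin m)) (K : Sym2 (Fin m) → ℕ) (a b c d : Fin m)
    (hp : Function.Injective ![a, b, c, d])
    (h1 : H.Adj a b) (h2 : H.Adj b c) (h3 : H.Adj c d)
    (hlt : (L s(φ.symm 0, φ.symm 1) < L s(φ.symm 1, φ.symm 2) ↔ K s(a, b) < K s(b, c)) ∧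
      (L s(φ.symm 1, φ.symm 2) < L s(φ.symm 2, φ.symm 3) ↔ K s(b, c) < K s(c, d)) ∧
      (L s(φ.symm 0, φ.symm 1) < L s(φ.symm 2, φ.symm 3) ↔ K s(a, b) < K s(c, d)))
    (k1 : K s(a, b) ≠ K s(b, c)) (k2 : K s(b, c) ≠ K s(c, d)) (k3 : K s(a, b) ≠ K s(c, d)) :
    (EOGraph.mk m H K).Contains (EOGraph.mk n G L) := by
  refine p4_contains G L hL φ H K _ hp ?_ ?_
  · intro t
    fin_cases t
    exacts [h1, h2, h3]
  · obtain ⟨g1, g2, g3⟩ := hlt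
    intro t t'
    fin_cases t <;> fin_cases t'
    · exact fun h => absurd h (lt_irrefl _)
    · exact g1.1
    · exact g3.1
    · change L s(φ.symm 1, φ.symm 2) < L s(φ.symm 0, φ.symm 1) → K s(b, c) < K s(a, b)
      omega
    · exact fun h => absurd h (lt_irrefl _)
    · exact g2.1
    · change L s(φ.symm 2, φ.symm 3) < L s(φ.symm 0, φ.symm 1) → K s(c, d) < K s(a, b)
      omega
    · change L s(φ.symm 2, φ.symm 3) < L s(φ.symm 1, φ.symm 2) → K s(c, d) < K s(b, c)
      omega
    · exact fun h => absurd h (lt_irrefl _)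

instance (n : ℕ) : DecidableRel (parHost n).Adj := fun u v =>
  inferInstanceAs (Decidable ((u : ℕ) % 2 ≠ (v : ℕ) % 2))

theorem p4_host {n : ℕ} (G : SimpleGraph (Fin n)) (L : Sym2 (Fin n) → ℕ)
    (hL : (EOGraph.mk n G L).Valid) (φ : G ≃g SimpleGraph.pathGraph 4)
    (K : Sym2 (Fin 6) → ℕ) (hK : (EOGraph.mk 6 (parHost 6) K).Valid) :
    (EOGraph.mk 6 (parHost 6) K).Contains (EOGraph.mk n G L) := by
  have hneK : ∀ a b c d, (parHost 6).Adj a b → (parHost 6).Adj c d → s(a, b) ≠ s(c, d) →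
      K s(a, b) ≠ K s(c, d) := fun a b c d hab hcd h h2 => h (hK s(a, b) hab s(c, d) hcd h2)
  have hinj : ∀ a b c d, (parHost 6).Adj a b → (parHost 6).Adj b c → (parHost 6).Adj c d →
      a ≠ c → b ≠ d → Function.Injective ![a, b, c, d] ∧ Function.Injective ![d, c, b, a] ∧
      s(a, b) ≠ s(b, c) ∧ s(b, c) ≠ s(c, d) ∧ s(a, b) ≠ s(c, d) := by
    intro a b c d hab hbc hcd hac hbd
    have had : a ≠ d := by
      rintro rfl
      change (_ : ℕ) % 2 ≠ _ % 2 at hab hbc hcd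
      omega
    have h1 := hab.ne
    have h2 := hbc.ne
    have h3 := hcd.ne
    clear hab hbc hcd
    refine ⟨?_, ?_, ?_, ?_, ?_⟩
    · intro i j hij
      fin_cases i <;> fin_cases j <;> first | rfl | (exfalso; revert hij; simp; tauto)
    · intro i j hij
      fin_cases i <;> fin_cases j <;> first | rfl | (exfalso; revert hij; simp; tauto)
    all_goals
      rw [ne_eq, Sym2.eq_iff]
      tauto
  have hsw : ∀ a b, K s(a, b) = K s(b, a) := fun a b => congrArg K Sym2.eq_swap
  -- any alternating path with the right order pattern, in one direction or the other
  have main : ∀ a b c d, (parHost 6).Adj a b → (parHost 6).Adj b c → (parHost 6).Adj c d →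
      a ≠ c → b ≠ d →
      (((L s(φ.symm 0, φ.symm 1) < L s(φ.symm 1, φ.symm 2) ↔ K s(a, b) < K s(b, c)) ∧
      (L s(φ.symm 1, φ.symm 2) < L s(φ.symm 2, φ.symm 3) ↔ K s(b, c) < K s(c, d)) ∧
      (L s(φ.symm 0, φ.symm 1) < L s(φ.symm 2, φ.symm 3) ↔ K s(a, b) < K s(c, d))) ∨
      ((L s(φ.symm 0, φ.symm 1) < L s(φ.symm 1, φ.symm 2) ↔ K s(c, d) < K s(b, c)) ∧
      (L s(φ.symm 1, φ.symm 2) < L s(φ.symm 2, φ.symm 3) ↔ K s(b, c) < K s(a, b)) ∧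
      (L s(φ.symm 0, φ.symm 1) < L s(φ.symm 2, φ.symm 3) ↔ K s(c, d) < K s(a, b)))) →
      (EOGraph.mk 6 (parHost 6) K).Contains (EOGraph.mk n G L) := by
    intro a b c d hab hbc hcd hac hbd h
    obtain ⟨i1, i2, e1, e2, e3⟩ := hinj a b c d hab hbc hcd hac hbd
    have f1 := hneK _ _ _ _ hab hbc e1
    have f2 := hneK _ _ _ _ hbc hcd e2
    have f3 := hneK _ _ _ _ hab hcd e3
    rcases h with h | h
    · exact p4_contains' G L hL φ _ K a b c d i1 hab hbc hcd h f1 f2 f3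
    · rw [hsw a b, hsw b c, hsw c d] at *
      exact p4_contains' G L hL φ _ K d c b a i2 hcd.symm hbc.symm hab.symm h f2.symm f1.symm f3.symm
  have hadjφ : ∀ i j : Fin 4, (i : ℕ) + 1 = j → G.Adj (φ.symm i) (φ.symm j) := fun i j h => by
    rw [φ.symm.map_adj_iff, SimpleGraph.pathGraph_adj]; exact Or.inl h
  have hLne : ∀ i j k l : Fin 4, (i : ℕ) + 1 = j → (k : ℕ) + 1 = l → s(i, j) ≠ s(k, l) →
      L s(φ.symm i, φ.symm j) ≠ L s(φ.symm k, φ.symm l) := by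
    intro i j k l h1 h2 h3 h4
    apply h3
    have := hL s(φ.symm i, φ.symm j) (hadjφ i j h1) s(φ.symm k, φ.symm l) (hadjφ k l h2) h4
    exact Sym2.map.injective φ.symm.injective this
  have g1 := hLne 0 1 1 2 rfl rfl (by decide)
  have g2 := hLne 1 2 2 3 rfl rfl (by decide)
  have g3 := hLne 0 1 2 3 rfl rfl (by decide)
  clear hLne hadjφ
  have hext : ∀ u v, (parHost 6).Adj u v →
      ∃ x y, (parHost 6).Adj x u ∧ (parHost 6).Adj v y ∧ x ≠ v ∧ u ≠ y := by decide
  have hE : (Finset.univ.filter fun p : Fin 6 × Fin 6 => (parHost 6).Adj p.1 p.2).Nonempty :=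
    ⟨(0, 1), by decide⟩
  have mono : ∃ a b c d, (parHost 6).Adj a b ∧ (parHost 6).Adj b c ∧ (parHost 6).Adj c d ∧
      a ≠ c ∧ b ≠ d ∧ K s(a, b) < K s(b, c) ∧ K s(b, c) < K s(c, d) := by
    have key : ∀ v1 v2 v3, (parHost 6).Adj 0 v1 → (parHost 6).Adj 0 v2 → (parHost 6).Adj 0 v3 →
        v1 ≠ v2 → v2 ≠ v3 → K s(0, v1) < K s(0, v2) → K s(0, v2) < K s(0, v3) →
        ∃ a b c d, (parHost 6).Adj a b ∧ (parHost 6).Adj b c ∧ (parHost 6).Adj c d ∧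
      a ≠ c ∧ b ≠ d ∧ K s(a, b) < K s(b, c) ∧ K s(b, c) < K s(c, d) := by
      intro v1 v2 v3 h1 h2 h3 n1 n2 l1 l2
      have h4 : (parHost 6).Adj 2 v2 := (by decide : ∀ v, (parHost 6).Adj 0 v → (parHost 6).Adj 2 v) v2 h2
      have h5 : s(2, v2) ≠ s(0, v2) := by
        intro h
        rw [Sym2.congr_left] at h
        exact absurd h (by decide)
      rcases (hneK _ _ _ _ h4 h2 h5).lt_or_gt with h | h
      · exact ⟨2, v2, 0, v3, h4, h2.symm, h3, by decide, n2, by rwa [hsw v2 0], by rwa [hsw v2 0]⟩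
      · exact ⟨v1, 0, v2, 2, h1.symm, h2, h4.symm, n1, by decide, by rwa [hsw v1 0],
          by rwa [hsw v2 2]⟩
    have b1 := hneK 0 1 0 3 (by decide) (by decide) (by decide)
    have b2 := hneK 0 1 0 5 (by decide) (by decide) (by decide)
    have b3 := hneK 0 3 0 5 (by decide) (by decide) (by decide)
    rcases b1.lt_or_gt with c1 | c1 <;> rcases b2.lt_or_gt with c2 | c2 <;>
      rcases b3.lt_or_gt with c3 | c3
    · exact key 1 3 5 (by decide) (by decide) (by decide) (by decide) (by decide) c1 c3
    · exact key 1 5 3 (by decide) (by decide) (by decide) (by decide) (by decide) c2 c3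
    · omega
    · exact key 5 1 3 (by decide) (by decide) (by decide) (by decide) (by decide) c2 c1
    · exact key 3 1 5 (by decide) (by decide) (by decide) (by decide) (by decide) c1 c2
    · omega
    · exact key 3 5 1 (by decide) (by decide) (by decide) (by decide) (by decide) c3 c2
    · exact key 5 3 1 (by decide) (by decide) (by decide) (by decide) (by decide) c3 c1
  have hmono : ((L s(φ.symm 0, φ.symm 1) < L s(φ.symm 1, φ.symm 2)) ↔
      (L s(φ.symm 1, φ.symm 2) < L s(φ.symm 2, φ.symm 3))) →
      (EOGraph.mk 6 (parHost 6) K).Contains (EOGraph.mk n G L) := by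
    intro h
    obtain ⟨a, b, c, d, hab, hbc, hcd, hac, hbd, h1, h2⟩ := mono
    apply main a b c d hab hbc hcd hac hbd
    omega
  by_cases h1 : L s(φ.symm 0, φ.symm 1) < L s(φ.symm 1, φ.symm 2) <;>
    by_cases h2 : L s(φ.symm 1, φ.symm 2) < L s(φ.symm 2, φ.symm 3)
  · exact hmono (by tauto)
  · -- middle is the maximum
    obtain ⟨⟨u, v⟩, hmem, hmax⟩ := Finset.exists_max_image _ (fun p => K s(p.1, p.2)) hE
    simp only [Finset.mem_filter, Finset.mem_univ, true_and, Prod.forall] at hmem hmax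
    obtain ⟨x, y, hx, hy, hxv, huy⟩ := hext u v hmem
    apply main x u v y hx hmem hy hxv huy
    obtain ⟨-, -, e1, e2, e3⟩ := hinj x u v y hx hmem hy hxv huy
    have f1 := hneK _ _ _ _ hx hmem e1
    have f2 := hneK _ _ _ _ hmem hy e2
    have f3 := hneK _ _ _ _ hx hy e3
    have f4 := hmax _ _ hx
    have f5 := hmax _ _ hy
    omega
  · obtain ⟨⟨u, v⟩, hmem, hmax⟩ := Finset.exists_min_image _ (fun p => K s(p.1, p.2)) hE
    simp only [Finset.mem_filter, Finset.mem_univ, true_and, Prod.forall] at hmem hmax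
    obtain ⟨x, y, hx, hy, hxv, huy⟩ := hext u v hmem
    apply main x u v y hx hmem hy hxv huy
    obtain ⟨-, -, e1, e2, e3⟩ := hinj x u v y hx hmem hy hxv huy
    have f1 := hneK _ _ _ _ hx hmem e1
    have f2 := hneK _ _ _ _ hmem hy e2
    have f3 := hneK _ _ _ _ hx hy e3
    have f4 := hmax _ _ hx
    have f5 := hmax _ _ hy
    omega
  · exact hmono (by tauto)

/-- Embedding of an edge-ordered star forest into an infinite ordered bipartite structure. -/
theorem starForest_pos {N : ℕ} (G : SimpleGraph (Fin N)) (hiso : ∀ v, ∃ w, G.Adj v w)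
    (hs : IsStarForest G) (L : Sym2 (Fin N) → ℕ) (hL : (EOGraph.mk N G L).Valid)
    {α : Type*} [LinearOrder α] (y : ℕ → ℕ → α) (hsymm : ∀ a b, y a b = y b a)
    (hy : ∀ a b a' b', y (2 * a) (2 * b + 1) = y (2 * a') (2 * b' + 1) → a = a' ∧ b = b') :
    ∃ pos : Fin N → ℕ, Function.Injective pos ∧ (∀ a b, G.Adj a b → pos a % 2 ≠ pos b % 2) ∧
      ∀ a b c d, G.Adj a b → G.Adj c d → L s(a, b) < L s(c, d) →
        y (pos a) (pos b) < y (pos c) (pos d) := by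
  classical
  obtain ⟨q, hq⟩ : ∃ q, ∀ e, L e < q := by
    obtain ⟨M, hM⟩ := (Set.finite_range L).bddAbove
    exact ⟨M + 1, fun e => Nat.lt_succ_of_le (hM ⟨e, rfl⟩)⟩
  obtain ⟨c, w, hc, hw, hcw, hlt⟩ : ∃ c w : ℕ → ℕ, Function.Injective c ∧
      (∀ j j', j < j' → j' < q → w j ≠ w j') ∧ (∀ i j, c i % 2 ≠ w j % 2) ∧
      ∀ i i' j j', i < N → i' < N → j < j' → j' < q → y (c i) (w j) < y (c i') (w j') := by
    rcases core_matrix (fun a b => y (2 * a) (2 * b + 1)) hy N q with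
      ⟨c, w, h1, h2, h3⟩ | ⟨c, w, h1, h2, h3⟩
    · refine ⟨fun i => 2 * c i, fun j => 2 * w j + 1, fun i j h => h1 (by simpa using h),
        fun j j' h h' h'' => h2 j j' h h' (by simpa using h''), fun i j => by dsimp only; omega, h3⟩
    · refine ⟨fun i => 2 * c i + 1, fun j => 2 * w j, fun i j h => h1 (by simpa using h),
        fun j j' h h' h'' => h2 j j' h h' (by simpa using h''), fun i j => by dsimp only; omega, ?_⟩
      intro i i' j j' a1 a2 a3 a4
      rw [hsymm, hsymm (2 * c i' + 1)]
      exact h3 i i' j j' a1 a2 a3 a4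
  obtain ⟨-, hs⟩ := hs
  choose cenC hcenC hcen using hs
  let cen : Fin N → Fin N := fun v => cenC (G.connectedComponentMk v)
  have hcomp : ∀ a b, G.Adj a b → cen a = cen b := fun a b h => by
    simp only [cen]
    rw [SimpleGraph.ConnectedComponent.eq.mpr h.reachable]
  have hmem : ∀ a b, G.Adj a b → cen a = a ∨ cen a = b := by
    intro a b h
    have := hcen (G.connectedComponentMk a) s(a, b) h (by
      intro v hv
      rw [SimpleGraph.ConnectedComponent.mem_supp_iff]
      rcases Sym2.mem_iff.1 hv with rfl | rfl
      · rfl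
      · exact SimpleGraph.ConnectedComponent.eq.mpr h.symm.reachable)
    exact Sym2.mem_iff.1 this
  have hleaf : ∀ v, cen v ≠ v → G.Adj v (cen v) := by
    intro v hv
    obtain ⟨u, hu⟩ := hiso v
    rcases hmem v u hu with h | h
    · exact absurd h hv
    · rwa [h]
  let pos : Fin N → ℕ := fun v => if cen v = v then c v else w (L s(v, cen v))
  have pos1 : ∀ v, cen v = v → pos v = c v := fun v h => if_pos h
  have pos2 : ∀ v, cen v ≠ v → pos v = w (L s(v, cen v)) := fun v h => if_neg h
  have hwinj : ∀ j j', j < q → j' < q → w j = w j' → j = j' := by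
    intro j j' h1 h2 h
    rcases lt_trichotomy j j' with h3 | h3 | h3
    · exact absurd h (hw _ _ h3 h2)
    · exact h3
    · exact absurd h.symm (hw _ _ h3 h1)
  -- every edge in oriented form
  have hor : ∀ a b, G.Adj a b → ∃ i : Fin N, s(pos a, pos b) = s(c i, w (L s(a, b))) := by
    intro a b h
    have h1 := hcomp a b h
    rcases hmem a b h with h2 | h2
    · have h3 : cen b ≠ b := by rw [← h1, h2]; exact h.ne
      refine ⟨a, ?_⟩
      rw [pos1 a h2, pos2 b h3, ← h1, h2, Sym2.eq_swap (a := b)]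
    · have h3 : cen a ≠ a := by rw [h2]; exact h.ne'
      refine ⟨b, ?_⟩
      rw [pos2 a h3, pos1 b (h1.symm.trans h2), h2, Sym2.eq_swap (a := c _)]
  refine ⟨pos, ?_, ?_, ?_⟩
  · intro a b h
    by_cases ha : cen a = a <;> by_cases hb : cen b = b
    · rw [pos1 a ha, pos1 b hb] at h
      exact Fin.ext (hc h)
    · rw [pos1 a ha, pos2 b hb] at h
      exact absurd (congrArg (· % 2) h) (hcw _ _)
    · rw [pos2 a ha, pos1 b hb] at h
      exact absurd (congrArg (· % 2) h.symm) (hcw _ _)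
    · rw [pos2 a ha, pos2 b hb] at h
      have h1 := hL s(a, cen a) (hleaf a ha) s(b, cen b) (hleaf b hb) (hwinj _ _ (hq _) (hq _) h)
      rw [Sym2.eq_iff] at h1
      rcases h1 with h1 | ⟨h1, h2⟩
      · exact h1.1
      · exfalso
        have h3 := hcomp _ _ (hleaf a ha)
        rw [h2] at h3
        exact hb h3.symm
  · intro a b h
    obtain ⟨i, hi⟩ := hor a b h
    have := hcw i (L s(a, b))
    rw [Sym2.eq_iff] at hi
    rcases hi with ⟨h1, h2⟩ | ⟨h1, h2⟩ <;> rw [h1, h2]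
    · exact this
    · exact this.symm
  · intro a b a' b' h h' hl
    obtain ⟨i, hi⟩ := hor a b h
    obtain ⟨i', hi'⟩ := hor a' b' h'
    have e : ∀ s t s' t', s(s, t) = s(s', t') → y s t = y s' t' := by
      intro s t s' t' h
      rw [Sym2.eq_iff] at h
      rcases h with ⟨rfl, rfl⟩ | ⟨rfl, rfl⟩
      · rfl
      · exact hsymm _ _
    rw [e _ _ _ _ hi, e _ _ _ _ hi']
    exact hlt _ _ _ _ i.isLt i'.isLt hl (hq _)

theorem starForest_host {N : ℕ} (G : SimpleGraph (Fin N)) (hiso : ∀ v, ∃ w, G.Adj v w)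
    (hs : IsStarForest G) (L : Sym2 (Fin N) → ℕ) (hL : (EOGraph.mk N G L).Valid) :
    ∃ n, ∀ K, (EOGraph.mk (n + 1) (parHost (n + 1)) K).Valid →
      (EOGraph.mk (n + 1) (parHost (n + 1)) K).Contains (EOGraph.mk N G L) := by
  by_contra hcon
  push Not at hcon
  choose K hK hnc using hcon
  have hge : ∀ m : ℕ, ∀ᶠ n in (hyperfilter ℕ : Filter ℕ), m ≤ n := fun m =>
    Nat.hyperfilter_le_atTop (eventually_ge_atTop m)
  have hval : ∀ n m, m ≤ n → ((Fin.ofNat (n + 1) m : Fin (n + 1)) : ℕ) = m := fun n m h =>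
    Nat.mod_eq_of_lt (by omega)
  obtain ⟨pos, hinj, hpar, hlt⟩ := starForest_pos G hiso hs L hL
    (α := Germ (hyperfilter ℕ : Filter ℕ) ℕ)
    (fun a b => ((fun n => K n s(Fin.ofNat (n + 1) a, Fin.ofNat (n + 1) b) : ℕ → ℕ) :
      Germ (hyperfilter ℕ : Filter ℕ) ℕ))
    (fun a b => by simp only [Sym2.eq_swap]) (by
      intro a b a' b' h
      rw [Germ.coe_eq] at h
      obtain ⟨n, hn, h1, h2, h3, h4⟩ := (h.and ((hge (2 * a)).and ((hge (2 * b + 1)).and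
        ((hge (2 * a')).and (hge (2 * b' + 1)))))).exists
      have h5 := hK n _ (by
          change _ % 2 ≠ _ % 2
          rw [hval _ _ h1, hval _ _ h2]; omega) _ (by
          change _ % 2 ≠ _ % 2
          rw [hval _ _ h3, hval _ _ h4]; omega) hn
      rw [Sym2.eq_iff] at h5
      simp only [Fin.ext_iff, hval _ _ h1, hval _ _ h2, hval _ _ h3, hval _ _ h4] at h5
      omega)
  have hev : ∀ᶠ n in (hyperfilter ℕ : Filter ℕ), (∀ v, pos v ≤ n) ∧
      ∀ a b c d, G.Adj a b → G.Adj c d → L s(a, b) < L s(c, d) →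
        K n s(Fin.ofNat (n + 1) (pos a), Fin.ofNat (n + 1) (pos b)) <
        K n s(Fin.ofNat (n + 1) (pos c), Fin.ofNat (n + 1) (pos d)) := by
    rw [eventually_and]
    refine ⟨eventually_all.2 fun v => hge _, ?_⟩
    simp only [eventually_all]
    intro a b c d h1 h2 h3
    exact Germ.coe_lt.1 (hlt a b c d h1 h2 h3)
  obtain ⟨n, h1, h2⟩ := hev.exists
  apply hnc n
  refine EOGraph.contains_of_strict G L _ (K n) hL (fun v => Fin.ofNat (n + 1) (pos v)) ?_ ?_ h2
  · intro a b h
    apply hinj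
    have := congrArg Fin.val h
    simpa only [hval _ _ (h1 _)] using this
  · intro a b h
    change _ % 2 ≠ _ % 2
    rw [hval _ _ (h1 _), hval _ _ (h1 _)]
    exact hpar a b h


/-- For a finite simple graph `G` with at least one edge and no
isolated vertices: `χ⁺(G) = 2` if `G` is a star forest or the path on four vertices;
`χ⁺(K_3) = 3`; and `χ⁺(G) = ∞` for every other such graph. -/
theorem chiPlus_classification {N : ℕ} (G : SimpleGraph (Fin N))
    (hne : G.edgeSet.Nonempty) (hiso : ∀ v, ∃ w, G.Adj v w) :
    ((IsStarForest G ∨ Nonempty (G ≃g SimpleGraph.pathGraph 4)) → chiPlus G = 2) ∧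
    (Nonempty (G ≃g (⊤ : SimpleGraph (Fin 3))) → chiPlus G = 3) ∧
    ((¬ IsStarForest G ∧ ¬ Nonempty (G ≃g SimpleGraph.pathGraph 4) ∧
        ¬ Nonempty (G ≃g (⊤ : SimpleGraph (Fin 3)))) → chiPlus G = ⊤) := by
  refine ⟨?_, fun ⟨φ⟩ => chiPlus_K3 G φ, fun ⟨h1, h2, h3⟩ => chiPlus_top G hne hiso h1 h2 h3⟩
  rintro (h | ⟨⟨φ⟩⟩)
  · refine chiPlus_eq_two G hne fun L hL => ?_
    obtain ⟨n, hn⟩ := starForest_host G hiso h L hL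
    exact ⟨n + 1, parHost (n + 1), parHost_colorable _, hn⟩
  · exact chiPlus_eq_two G hne fun L hL =>
      ⟨6, parHost 6, parHost_colorable _, fun K hK => p4_host G L hL φ K hK⟩
end

section
/- For every positive integer n, lex(n, P_4^{123}) ≤ 3n/2, with equality if and only if n is divisible by 4; that is, every edge-ordered graph on n vertices avoiding the monotone path P_4^{123} has at most 3n/2 edges, and an edge-ordered graph on n vertices with exactly 3n/2 edges avoiding P_4^{123} exists exactly when 4 divides n. -/
/-- The monotone edge-ordered path `P_4^{123}` on vertices `a,b,c,d`:
edge-order `ab < bc < cd`. -/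
def P4_123 : EOGraph := pathEO 4 [1, 2, 3]

section Helpers

open Finset

theorem p4_adj (i j : Fin 4) : P4_123.graph.Adj i j ↔ ((i : ℕ) + 1 = j ∨ (j : ℕ) + 1 = i) := by
  change (SimpleGraph.fromRel (fun a b : Fin 4 => (a : ℕ) + 1 = (b : ℕ))).Adj i j ↔ _
  rw [SimpleGraph.fromRel_adj]
  constructor
  · rintro ⟨_, h⟩; exact h
  · intro h
    refine ⟨?_, h⟩
    rintro rfl
    omega

theorem p4_label (i j : Fin 4) : P4_123.label s(i, j) = [1, 2, 3].getD ((min i j : Fin 4) : ℕ) 0 :=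
  rfl

theorem contains_of_path (G : EOGraph) (a b c d : Fin G.nv)
    (hab : G.graph.Adj a b) (hbc : G.graph.Adj b c) (hcd : G.graph.Adj c d)
    (hac : a ≠ c) (had : a ≠ d) (hbd : b ≠ d)
    (h1 : G.label s(a, b) < G.label s(b, c)) (h2 : G.label s(b, c) < G.label s(c, d)) :
    G.Contains P4_123 := by
  have e1 := hab.ne
  have e2 := hbc.ne
  have e3 := hcd.ne
  have hinj : Function.Injective (![a, b, c, d] : Fin 4 → Fin G.nv) := by
    intro i j hij
    fin_cases i <;> fin_cases j <;> simp_all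
  refine ⟨(⟨![a, b, c, d], hinj⟩ : Fin 4 ↪ Fin G.nv), ?_, ?_⟩
  · intro (i : Fin 4) (j : Fin 4) h
    rw [p4_adj] at h
    change G.graph.Adj ((![a, b, c, d] : Fin 4 → Fin G.nv) i) ((![a, b, c, d] : Fin 4 → Fin G.nv) j)
    have := hab.symm
    have := hbc.symm
    have := hcd.symm
    fin_cases i <;> fin_cases j <;> simp_all
  · intro (i : Fin 4) (j : Fin 4) (k : Fin 4) (l : Fin 4) h h'
    rw [p4_adj] at h h'
    rw [p4_label, p4_label]
    change _ ↔ G.label s((![a, b, c, d] : Fin 4 → Fin G.nv) i, (![a, b, c, d] : Fin 4 → Fin G.nv) j) <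
      G.label s((![a, b, c, d] : Fin 4 → Fin G.nv) k, (![a, b, c, d] : Fin 4 → Fin G.nv) l)
    have q1 : G.label s(b, a) = G.label s(a, b) := by rw [Sym2.eq_swap]
    have q2 : G.label s(c, b) = G.label s(b, c) := by rw [Sym2.eq_swap]
    have q3 : G.label s(d, c) = G.label s(c, d) := by rw [Sym2.eq_swap]
    have hi : ∀ i j : Fin 4, ((i : ℕ) + 1 = j ∨ (j : ℕ) + 1 = i) →
        (i = 0 ∧ j = 1) ∨ (i = 1 ∧ j = 0) ∨ (i = 1 ∧ j = 2) ∨ (i = 2 ∧ j = 1) ∨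
        (i = 2 ∧ j = 3) ∨ (i = 3 ∧ j = 2) := by decide
    have m01 : min (0 : Fin 4) 1 = 0 := rfl
    have m10 : min (1 : Fin 4) 0 = 0 := rfl
    have m12 : min (1 : Fin 4) 2 = 1 := rfl
    have m21 : min (2 : Fin 4) 1 = 1 := rfl
    have m23 : min (2 : Fin 4) 3 = 2 := rfl
    have m32 : min (3 : Fin 4) 2 = 2 := rfl
    rcases hi i j h with ⟨rfl, rfl⟩ | ⟨rfl, rfl⟩ | ⟨rfl, rfl⟩ | ⟨rfl, rfl⟩ | ⟨rfl, rfl⟩ | ⟨rfl, rfl⟩ <;>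
    rcases hi k l h' with ⟨rfl, rfl⟩ | ⟨rfl, rfl⟩ | ⟨rfl, rfl⟩ | ⟨rfl, rfl⟩ | ⟨rfl, rfl⟩ | ⟨rfl, rfl⟩ <;>
    simp [m01, m10, m12, m21, m23, m32, q1, q2, q3] <;> omega

theorem path_of_contains (G : EOGraph) (h : G.Contains P4_123) :
    ∃ a b c d : Fin G.nv, G.graph.Adj a b ∧ G.graph.Adj b c ∧ G.graph.Adj c d ∧
      a ≠ c ∧ a ≠ d ∧ b ≠ d ∧
      G.label s(a, b) < G.label s(b, c) ∧ G.label s(b, c) < G.label s(c, d) := by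
  obtain ⟨f, h1, h2⟩ := h
  let g : Fin 4 ↪ Fin G.nv := f
  have a01 : P4_123.graph.Adj (0 : Fin 4) (1 : Fin 4) := (p4_adj 0 1).2 (by decide)
  have a12 : P4_123.graph.Adj (1 : Fin 4) (2 : Fin 4) := (p4_adj 1 2).2 (by decide)
  have a23 : P4_123.graph.Adj (2 : Fin 4) (3 : Fin 4) := (p4_adj 2 3).2 (by decide)
  refine ⟨g 0, g 1, g 2, g 3, h1 _ _ a01, h1 _ _ a12, h1 _ _ a23,
    g.injective.ne (by decide), g.injective.ne (by decide), g.injective.ne (by decide),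
    (h2 _ _ _ _ a01 a12).1 ?_, (h2 _ _ _ _ a12 a23).1 ?_⟩
  · show P4_123.label s((0 : Fin 4), (1 : Fin 4)) < P4_123.label s((1 : Fin 4), (2 : Fin 4))
    rw [p4_label, p4_label]; decide
  · show P4_123.label s((1 : Fin 4), (2 : Fin 4)) < P4_123.label s((2 : Fin 4), (3 : Fin 4))
    rw [p4_label, p4_label]; decide

section Abstract

variable {V : Type} [Fintype V] [DecidableEq V] (A : V → V → Prop) (L : V → V → ℕ)

/-- the neighbor of `u` with the least label that is at least `t` (or `u` if none exists) -/
def IsNxt (u : V) (t : ℕ) (v : V) : Prop :=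
  A u v ∧ t ≤ L u v ∧ ∀ w, A u w → t ≤ L u w → L u v ≤ L u w

open Classical in
noncomputable def nxt (u : V) (t : ℕ) : V :=
  if h : ∃ v, IsNxt A L u t v then h.choose else u

variable {A L}

theorem nxt_eq (hinj : ∀ u v w, A u v → A u w → L u v = L u w → v = w)
    {u : V} {t : ℕ} {v : V} (h : IsNxt A L u t v) : nxt A L u t = v := by
  have h' : ∃ v, IsNxt A L u t v := ⟨v, h⟩
  unfold nxt
  rw [dif_pos h']
  have hs := h'.choose_spec
  exact hinj u _ _ hs.1 h.1 (le_antisymm (hs.2.2 _ h.1 h.2.1) (h.2.2 _ hs.1 hs.2.1))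

theorem nxt_spec (hirr : ∀ u, ¬ A u u) {u : V} {t : ℕ} (h : A u (nxt A L u t)) :
    IsNxt A L u t (nxt A L u t) := by
  by_cases h' : ∃ v, IsNxt A L u t v
  · have := h'.choose_spec
    unfold nxt
    rw [dif_pos h']
    exact this
  · unfold nxt at h
    rw [dif_neg h'] at h
    exact absurd h (hirr u)

variable (A L)
noncomputable def f1 (u : V) : V := nxt A L u 0
noncomputable def f2 (u : V) : V := nxt A L (f1 A L u) (L u (f1 A L u) + 1)
noncomputable def f3 (u : V) : V := nxt A L (f2 A L u) (L (f1 A L u) (f2 A L u) + 1)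

noncomputable def Psi (p : V × Fin 3) : V × V :=
  ![(p.1, f1 A L p.1), (f1 A L p.1, f2 A L p.1), (f2 A L p.1, f3 A L p.1)] p.2

variable {A L}

/-- a dart is minimal at its source, or has a predecessor -/
theorem pred_or (hsymm : ∀ u v, A u v → A v u) (hL : ∀ u v, L u v = L v u)
    {u v : V} (h : A u v) :
    IsNxt A L u 0 v ∨ ∃ w, A w u ∧ L w u < L u v ∧ IsNxt A L u (L w u + 1) v := by
  classical
  by_cases hm : ∃ w, A u w ∧ L u w < L u v
  · right
    let S := univ.filter (fun w => A u w ∧ L u w < L u v)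
    have hS : S.Nonempty := by
      obtain ⟨w, hw⟩ := hm
      exact ⟨w, by simpa [S] using hw⟩
    obtain ⟨w, hw, hmax⟩ := S.exists_max_image (fun w => L u w) hS
    simp only [S, mem_filter, mem_univ, true_and] at hw hmax
    refine ⟨w, hsymm _ _ hw.1, by rw [hL w u]; exact hw.2, h, by rw [hL w u]; exact hw.2, ?_⟩
    intro x hx hx2
    by_contra hlt
    have := hmax x ⟨hx, by omega⟩
    rw [hL w u] at hx2
    omega
  · left
    push Not at hm
    exact ⟨h, Nat.zero_le _, fun w hw _ => hm w hw⟩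

theorem Psi_surj (hsymm : ∀ u v, A u v → A v u) (hL : ∀ u v, L u v = L v u)
    (hirr : ∀ u, ¬ A u u)
    (hinj : ∀ u v w, A u v → A u w → L u v = L u w → v = w)
    (hav : ∀ a b c d, A a b → A b c → A c d → a ≠ c → a ≠ d → b ≠ d →
      L a b < L b c → L b c < L c d → False) {u v : V} (h : A u v) :
    ∃ p, Psi A L p = (u, v) := by
  rcases pred_or hsymm hL h with h1 | ⟨w, hw, hwl, h1⟩
  · refine ⟨(u, 0), ?_⟩
    simp [Psi, f1, nxt_eq hinj h1]
  rcases pred_or hsymm hL hw with h2 | ⟨x, hx, hxl, h2⟩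
  · refine ⟨(w, 1), ?_⟩
    have e1 : f1 A L w = u := nxt_eq hinj h2
    have e2 : f2 A L w = v := by unfold f2; rw [e1]; exact nxt_eq hinj h1
    simp [Psi, e1, e2]
  rcases pred_or hsymm hL hx with h3 | ⟨y, hy, hyl, h3⟩
  · refine ⟨(x, 2), ?_⟩
    have e1 : f1 A L x = w := nxt_eq hinj h3
    have e2 : f2 A L x = u := by unfold f2; rw [e1]; exact nxt_eq hinj h2
    have e3 : f3 A L x = v := by unfold f3; rw [e1, e2]; exact nxt_eq hinj h1
    simp [Psi, e2, e3]
  exfalso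
  have n1 : y ≠ w := by rintro rfl; rw [hL] at hyl; omega
  have n2 : x ≠ u := by rintro rfl; rw [hL] at hxl; omega
  have n3 : w ≠ v := by rintro rfl; rw [hL] at hwl; omega
  have q1 : x = v := by
    by_contra hne
    exact hav x w u v hx hw h n2 hne n3 hxl hwl
  have q2 : y = u := by
    by_contra hne
    exact hav y x w u hy hx hw n1 hne n2 hyl hxl
  subst q1 q2
  omega

theorem card_le (hsymm : ∀ u v, A u v → A v u) (hL : ∀ u v, L u v = L v u)
    (hirr : ∀ u, ¬ A u u)
    (hinj : ∀ u v w, A u v → A u w → L u v = L u w → v = w)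
    (hav : ∀ a b c d, A a b → A b c → A c d → a ≠ c → a ≠ d → b ≠ d →
      L a b < L b c → L b c < L c d → False) (D : Finset (V × V))
    (hD : ∀ p, p ∈ D ↔ A p.1 p.2) : D.card ≤ 3 * Fintype.card V := by
  classical
  have hsub : D ⊆ univ.image (Psi A L) := by
    rintro ⟨u, v⟩ hp
    obtain ⟨p, hp⟩ := Psi_surj hsymm hL hirr hinj hav ((hD _).1 hp)
    exact mem_image.2 ⟨p, mem_univ _, hp⟩
  calc D.card ≤ _ := card_le_card hsub
    _ ≤ _ := card_image_le
    _ = _ := by simp [mul_comm]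

theorem four_dvd_of_inv (f g : V → V) (hf : ∀ u, f (f u) = u) (hg : ∀ u, g (g u) = u)
    (hc : ∀ u, f (g u) = g (f u)) (h1 : ∀ u, f u ≠ u) (h2 : ∀ u, g u ≠ u)
    (h3 : ∀ u, f u ≠ g u) : 4 ∣ Fintype.card V := by
  classical
  let F : V → Finset V := fun u => {u, f u, g u, f (g u)}
  have key : ∀ u w, F w = F u ↔ w ∈ F u := by
    intro u w
    constructor
    · intro h
      rw [← h]; simp [F]
    · intro h
      simp only [F, mem_insert, mem_singleton] at h
      rcases h with rfl | rfl | rfl | rfl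
      · rfl
      · ext x; simp only [F, mem_insert, mem_singleton, hf, hg, ← hc]; tauto
      · ext x; simp only [F, mem_insert, mem_singleton, hf, hg]; tauto
      · ext x; simp only [F, mem_insert, mem_singleton, hf, hg, ← hc]; tauto
  have hcard : ∀ u, (F u).card = 4 := by
    intro u
    have a1 : u ≠ f (g u) := fun h => h3 u (by rw [← hf (g u), ← h])
    have a2 : f u ≠ f (g u) := fun h => h2 u (by rw [← hf (g u), ← h, hf])
    exact card_eq_of_equiv_fin (by
      have : (F u).card = 4 := by
        simp only [F]
        rw [card_insert_of_notMem, card_insert_of_notMem, card_insert_of_notMem, card_singleton]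
        · simpa using (h1 (g u)).symm
        · simp only [mem_insert, mem_singleton, not_or]; exact ⟨h3 u, a2⟩
        · simp only [mem_insert, mem_singleton, not_or]
          exact ⟨(h1 u).symm, (h2 u).symm, a1⟩
      exact (F u).equivFinOfCardEq this)
  have := card_eq_sum_card_image F (univ : Finset V)
  rw [sum_const_nat (m := 4)] at this
  · rw [card_univ] at this; exact ⟨_, by rw [this, mul_comm]⟩
  · intro x hx
    obtain ⟨u, _, rfl⟩ := mem_image.1 hx
    rw [← hcard u]
    congr 1
    ext w
    simp [key]

theorem four_dvd (hsymm : ∀ u v, A u v → A v u) (hL : ∀ u v, L u v = L v u)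
    (hirr : ∀ u, ¬ A u u)
    (hinj : ∀ u v w, A u v → A u w → L u v = L u w → v = w)
    (hav : ∀ a b c d, A a b → A b c → A c d → a ≠ c → a ≠ d → b ≠ d →
      L a b < L b c → L b c < L c d → False) (D : Finset (V × V))
    (hD : ∀ p, p ∈ D ↔ A p.1 p.2) (heq : D.card = 3 * Fintype.card V) :
    4 ∣ Fintype.card V := by
  classical
  have hsub : D ⊆ univ.image (Psi A L) := by
    rintro ⟨u, v⟩ hp
    obtain ⟨p, hp⟩ := Psi_surj hsymm hL hirr hinj hav ((hD _).1 hp)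
    exact mem_image.2 ⟨p, mem_univ _, hp⟩
  have hle : (univ.image (Psi A L)).card ≤ 3 * Fintype.card V :=
    card_image_le.trans (by simp [mul_comm])
  have hDe : D = univ.image (Psi A L) := eq_of_subset_of_card_le hsub (by omega)
  have hA : ∀ p, A (Psi A L p).1 (Psi A L p).2 := by
    intro p
    rw [← hD, hDe]
    exact mem_image_of_mem _ (mem_univ _)
  have adj1 : ∀ u, A u (f1 A L u) := fun u => by simpa [Psi] using hA (u, 0)
  have adj2 : ∀ u, A (f1 A L u) (f2 A L u) := fun u => by simpa [Psi] using hA (u, 1)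
  have adj3 : ∀ u, A (f2 A L u) (f3 A L u) := fun u => by simpa [Psi] using hA (u, 2)
  have l1 : ∀ u, L u (f1 A L u) < L (f1 A L u) (f2 A L u) := fun u =>
    (nxt_spec hirr (adj2 u)).2.1
  have l2 : ∀ u, L (f1 A L u) (f2 A L u) < L (f2 A L u) (f3 A L u) := fun u =>
    (nxt_spec hirr (adj3 u)).2.1
  have n12 : ∀ u, f1 A L u ≠ f2 A L u := fun u h => hirr _ (h ▸ adj2 u)
  have n01 : ∀ u, f1 A L u ≠ u := fun u h => by
    have := adj1 u; rw [h] at this; exact hirr _ this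
  have n02 : ∀ u, f2 A L u ≠ u := fun u h => by
    have := l1 u; rw [h, hL] at this; omega
  have n13 : ∀ u, f1 A L u ≠ f3 A L u := fun u h => by
    have := l2 u; rw [← h, hL] at this; omega
  have e3 : ∀ u, f3 A L u = u := by
    intro u
    by_contra hne
    exact hav _ _ _ _ (adj1 u) (adj2 u) (adj3 u) (n02 u).symm (fun h => hne h.symm) (n13 u)
      (l1 u) (l2 u)
  have surj : ∀ u v, A u v → (v = f1 A L u) ∨ (∃ x, f1 A L x = u ∧ f2 A L x = v) ∨
      f2 A L v = u := by
    intro u v h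
    obtain ⟨⟨x, i⟩, hp⟩ := Psi_surj hsymm hL hirr hinj hav h
    fin_cases i <;> simp [Psi] at hp
    · left; rw [← hp.1, ← hp.2]
    · right; left; exact ⟨x, hp⟩
    · right; right; rw [e3] at hp; rw [← hp.2]; exact hp.1
  simp only [e3] at adj3 l2
  have i1 : ∀ u, f1 A L (f1 A L u) = u := by
    intro u
    rcases surj _ _ (hsymm _ _ (adj1 u)) with h | ⟨x, hx1, hx2⟩ | h
    · exact h.symm
    · exfalso
      have a1 := adj1 x
      have b1 := l1 x
      rw [hx1] at a1
      rw [hx1, hx2] at b1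
      have b2 := l1 u
      have b3 := l2 u
      have c1 := hL u (f1 A L u)
      have c2 := hL u (f2 A L u)
      refine hav x (f1 A L u) u (f2 A L u) a1 (hsymm _ _ (adj1 u)) (hsymm _ _ (adj3 u))
        ?_ ?_ (n12 u) b1 (by omega)
      · rintro rfl; exact n02 _ hx2
      · rintro h
        rw [h, hL (f2 A L u)] at b1
        omega
    · exact absurd h.symm (n12 u)
  have i2 : ∀ u, f2 A L (f2 A L u) = u := by
    intro u
    rcases surj _ _ (hsymm _ _ (adj3 u)) with h | ⟨x, hx1, hx2⟩ | h
    · exact absurd h.symm (n12 u)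
    · exfalso
      have hx : x = f1 A L u := by rw [← hx1, i1]
      have b1 := l2 x
      rw [hx1, hx2, hx] at b1
      have b3 := l2 u
      have c1 := hL u (f2 A L u)
      have c2 := hL (f1 A L u) (f2 A L u)
      omega
    · exact h
  refine four_dvd_of_inv (f1 A L) (f2 A L) i1 i2 ?_ n01 n02 n12
  intro u
  rcases surj _ _ (hsymm _ _ (adj2 u)) with h | ⟨x, hx1, hx2⟩ | h
  · exfalso
    apply n02 u
    rw [← i1 (f2 A L u), ← h, i1]
  · rw [← hx1, ← hx2, i1, i2]
  · exfalso
    apply n01 u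
    rw [← i2 (f1 A L u), h, i2]

end Abstract

theorem graph_bound (G : EOGraph) (hv : G.Valid) (hav : G.AvoidsFam {P4_123}) :
    2 * G.edges ≤ 3 * G.nv ∧ (2 * G.edges = 3 * G.nv → 4 ∣ G.nv) := by
  classical
  let A : Fin G.nv → Fin G.nv → Prop := G.graph.Adj
  let L : Fin G.nv → Fin G.nv → ℕ := fun u v => G.label s(u, v)
  have hsymm : ∀ u v, A u v → A v u := fun u v h => SimpleGraph.Adj.symm h
  have hL : ∀ u v, L u v = L v u := fun u v => by simp only [L]; rw [Sym2.eq_swap]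
  have hirr : ∀ u, ¬ A u u := fun u h => G.graph.loopless.irrefl u h
  have hinj : ∀ u v w, A u v → A u w → L u v = L u w → v = w := by
    intro u v w h1 h2 h
    have := hv s(u, v) h1 s(u, w) h2 h
    rcases Sym2.eq_iff.1 this with h' | h'
    · exact h'.2
    · exact h'.2.trans h'.1
  have hav' : ∀ a b c d, A a b → A b c → A c d → a ≠ c → a ≠ d → b ≠ d →
      L a b < L b c → L b c < L c d → False := by
    intro a b c d h1 h2 h3 h4 h5 h6 h7 h8
    exact hav P4_123 rfl (contains_of_path G a b c d h1 h2 h3 h4 h5 h6 h7 h8)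
  let D : Finset (Fin G.nv × Fin G.nv) := univ.filter (fun p => A p.1 p.2)
  have hD : ∀ p, p ∈ D ↔ A p.1 p.2 := by simp [D]
  have hcard : D.card = 2 * G.edges := by
    unfold EOGraph.edges
    rw [← SimpleGraph.coe_edgeFinset, Set.ncard_coe_finset,
      ← SimpleGraph.sum_degrees_eq_twice_card_edges]
    simp only [D]
    rw [← univ_product_univ, card_filter, sum_product]
    refine sum_congr rfl fun u _ => ?_
    rw [← card_filter, ← SimpleGraph.card_neighborFinset_eq_degree]
    congr 1
    ext v
    simp [A]
  have r1 := card_le hsymm hL hirr hinj hav' D hD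
  have r2 := four_dvd hsymm hL hirr hinj hav' D hD
  rw [Fintype.card_fin, hcard] at r1 r2
  exact ⟨r1, r2⟩

/-- colors of the proper edge-colouring of the complete graph on four vertices -/
def kcol (i j : Fin 4) : ℕ := i.val ^^^ j.val

theorem kcol_lt (i j : Fin 4) : kcol i j < 4 := by revert i j; decide
theorem kcol_symm (i j : Fin 4) : kcol i j = kcol j i := by revert i j; decide
theorem kcol_path : ∀ a b c d : Fin 4, a ≠ b → b ≠ c → c ≠ d → a ≠ c → a ≠ d → b ≠ d →
    kcol a b = kcol c d ∧ kcol b c ≠ kcol a b := by decide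

def res {N : ℕ} (a : Fin N) : Fin 4 := ⟨a.val % 4, Nat.mod_lt _ (by norm_num)⟩

def exG (N : ℕ) : SimpleGraph (Fin N) where
  Adj := fun a b => a ≠ b ∧ a.val / 4 = b.val / 4
  symm := ⟨fun _ _ h => ⟨h.1.symm, h.2.symm⟩⟩
  loopless := ⟨fun _ h => h.1 rfl⟩

def exGraph (N : ℕ) : EOGraph where
  nv := N
  graph := exG N
  label := symLabel fun a b => b.val + N * (a.val + N * kcol (res a) (res b))

theorem ex_label {N : ℕ} (a b : Fin N) :
    (exGraph N).label s(a, b) = (max a b).val + N * ((min a b).val + N * kcol (res a) (res b)) := by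
  change (max a b).val + N * ((min a b).val + N * kcol (res (min a b)) (res (max a b))) = _
  rcases le_total a b with h | h
  · rw [min_eq_left h, max_eq_right h]
  · rw [min_eq_right h, max_eq_left h, kcol_symm]

theorem enc_inj {N x y x' y' : ℕ} (hx : x < N) (hx' : x' < N) (h : x + N * y = x' + N * y') :
    x = x' ∧ y = y' := by
  have h1 : (x + N * y) % N = x := by rw [Nat.add_mul_mod_self_left, Nat.mod_eq_of_lt hx]
  have h2 : (x' + N * y') % N = x' := by rw [Nat.add_mul_mod_self_left, Nat.mod_eq_of_lt hx']
  have h3 : x = x' := by rw [← h1, ← h2, h]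
  subst h3
  exact ⟨rfl, Nat.eq_of_mul_eq_mul_left (by omega) (by omega : N * y = N * y')⟩

theorem enc_lt {N x y x' y' : ℕ} (hx' : x' < N) (h : x + N * y ≤ x' + N * y') : y ≤ y' := by
  by_contra hlt
  have : N * (y' + 1) ≤ N * y := Nat.mul_le_mul_left _ (by omega)
  rw [Nat.mul_add] at this
  omega

theorem ex_valid (N : ℕ) : (exGraph N).Valid := by
  intro e he f hf h
  induction e using Sym2.ind with | _ a b =>
  induction f using Sym2.ind with | _ c d =>
  change Fin N at a b c d
  rw [ex_label, ex_label] at h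
  obtain ⟨h1, h2⟩ := enc_inj (Fin.is_lt _) (Fin.is_lt _) h
  obtain ⟨h3, _⟩ := enc_inj (Fin.is_lt _) (Fin.is_lt _) h2
  have h1 := Fin.ext h1
  have h3 := Fin.ext h3
  refine (Sym2.eq_iff (x := a) (y := b) (z := c) (w := d)).2 ?_
  rcases le_total a b with p | p <;> rcases le_total c d with q | q <;>
    simp only [p, q, min_eq_left, min_eq_right, max_eq_left, max_eq_right] at h1 h3 <;> tauto

theorem ex_avoids (N : ℕ) : (exGraph N).AvoidsFam {P4_123} := by
  rintro H rfl hc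
  obtain ⟨a, b, c, d, hab, hbc, hcd, hac, had, hbd, l1, l2⟩ := path_of_contains _ hc
  change Fin N at a b c d
  rw [ex_label, ex_label] at l1 l2
  have key : ∀ {x y z x' y' z' : ℕ}, x' < N → y' < N →
      x + N * (y + N * z) < x' + N * (y' + N * z') → z ≤ z' := by
    intro x y z x' y' z' hx hy h
    exact enc_lt hy (enc_lt hx h.le)
  have k1 := key (Fin.is_lt _) (Fin.is_lt _) l1
  have k2 := key (Fin.is_lt _) (Fin.is_lt _) l2
  have hres : ∀ x y : Fin N, x.val / 4 = y.val / 4 → x ≠ y → res x ≠ res y := by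
    intro x y h hne h'
    have := congrArg Fin.val h'
    simp only [res] at this
    exact hne (Fin.ext (by omega))
  obtain ⟨nab, qab⟩ := hab
  obtain ⟨nbc, qbc⟩ := hbc
  obtain ⟨ncd, qcd⟩ := hcd
  have := kcol_path (res a) (res b) (res c) (res d) (hres _ _ qab nab) (hres _ _ qbc nbc)
    (hres _ _ qcd ncd) (hres _ _ (qab.trans qbc) hac) (hres _ _ (qab.trans (qbc.trans qcd)) had)
    (hres _ _ (qbc.trans qcd) hbd)
  omega

theorem ex_edges (k : ℕ) : 2 * (exGraph (4 * k)).edges = 3 * (4 * k) := by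
  classical
  change 2 * (exG (4 * k)).edgeSet.ncard = _
  rw [← SimpleGraph.coe_edgeFinset, Set.ncard_coe_finset,
      ← SimpleGraph.sum_degrees_eq_twice_card_edges]
  have : ∀ u : Fin (4 * k), (exG (4 * k)).degree u = 3 := by
    intro u
    rw [← SimpleGraph.card_neighborFinset_eq_degree]
    let g : Fin 4 ↪ Fin (4 * k) := ⟨fun i => ⟨4 * (u.val / 4) + i.val, by omega⟩, by
      intro i j h; simp only [Fin.mk.injEq] at h; exact Fin.ext (by omega)⟩
    have hg : ∀ i, (g i).val = 4 * (u.val / 4) + i.val := fun i => rfl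
    have : (exG (4 * k)).neighborFinset u = (univ.erase (res u)).map g := by
      ext v
      rw [SimpleGraph.mem_neighborFinset]
      change (u ≠ v ∧ u.val / 4 = v.val / 4) ↔ _
      simp only [mem_map, mem_erase, mem_univ, and_true]
      constructor
      · rintro ⟨h1, h2⟩
        refine ⟨res v, ?_, ?_⟩
        · intro h
          have := congrArg Fin.val h
          simp only [res] at this
          exact h1 (Fin.ext (by omega))
        · apply Fin.ext
          rw [hg]
          simp only [res]
          omega
      · rintro ⟨i, h1, rfl⟩
        constructor
        · intro h
          apply h1
          have := congrArg Fin.val h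
          rw [hg] at this
          apply Fin.ext
          simp only [res]
          omega
        · rw [hg]
          omega
    rw [this, card_map, card_erase_of_mem (mem_univ _)]
    rfl
  have h2 : ∑ u : Fin (4 * k), (exG (4 * k)).degree u = 3 * (4 * k) := by
    rw [sum_congr rfl fun u _ => this u]
    simp [mul_comm]
  exact h2

end Helpers

/-- For every positive integer `n`, `lex(n, P_4^{123}) ≤ 3n/2`, with
equality if and only if `n` is divisible by 4 (stated multiplied by 2 to stay in `ℕ`). -/
theorem lex_P4_123 (n : ℕ) (hn : 1 ≤ n) :
    2 * lexFam n {P4_123} ≤ 3 * n ∧ (2 * lexFam n {P4_123} = 3 * n ↔ 4 ∣ n) := by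
  have hbd : BddAbove {m : ℕ | ∃ G : EOGraph, G.nv = n ∧ G.Valid ∧ G.AvoidsFam {P4_123} ∧
      G.edges = m} := by
    refine ⟨3 * n, ?_⟩
    rintro m ⟨G, rfl, hv, ha, rfl⟩
    have := (graph_bound G hv ha).1
    omega
  have hne : {m : ℕ | ∃ G : EOGraph, G.nv = n ∧ G.Valid ∧ G.AvoidsFam {P4_123} ∧
      G.edges = m}.Nonempty := ⟨_, exGraph n, rfl, ex_valid n, ex_avoids n, rfl⟩
  obtain ⟨G, hnv, hv, ha, he⟩ := Nat.sSup_mem hne hbd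
  change G.edges = lexFam n {P4_123} at he
  have hb := graph_bound G hv ha
  rw [hnv, he] at hb
  refine ⟨hb.1, hb.2, ?_⟩
  rintro ⟨k, rfl⟩
  have h1 : (exGraph (4 * k)).edges ≤ lexFam (4 * k) {P4_123} :=
    le_csSup hbd ⟨exGraph (4 * k), rfl, ex_valid _, ex_avoids _, rfl⟩
  have h2 := ex_edges k
  have h3 := hb.1
  omega
end

section
/- lex(n, P_5^{2143}) = Θ(n log n); that is, there exist constants c, C > 0 such that for all n ≥ 2, c·n·log n ≤ lex(n, P_5^{2143}) ≤ C·n·log n. -/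
/-- The edge-ordered path `P_5^{2143}`: edge-order `bc < ab < de < cd`. -/
def P5_2143 : EOGraph := pathEO 5 [2, 1, 4, 3]

/-- The `k` smallest elements of a finite set. -/
lemma exists_lowest {α β : Type*} [DecidableEq α] [LinearOrder β] (L : α → β) (E : Finset α)
    (hL : ∀ x ∈ E, ∀ y ∈ E, L x = L y → x = y) (k : ℕ) (hk : k ≤ E.card) :
    ∃ S ⊆ E, S.card = k ∧ ∀ x ∈ S, ∀ y ∈ E \ S, L x < L y := by
  induction k with
  | zero => exact ⟨∅, by simp, by simp, by simp⟩
  | succ k ih =>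
    obtain ⟨S, hS, hc, hlt⟩ := ih (by omega)
    have hne : (E \ S).Nonempty := by
      rw [← Finset.card_pos, Finset.card_sdiff_of_subset hS]; omega
    obtain ⟨m, hm, hmin⟩ := Finset.exists_min_image (E \ S) L hne
    have hm' := Finset.mem_sdiff.1 hm
    refine ⟨insert m S, ?_, ?_, ?_⟩
    · intro x hx
      rcases Finset.mem_insert.1 hx with rfl | hx
      · exact hm'.1
      · exact hS hx
    · rw [Finset.card_insert_of_notMem hm'.2, hc]
    · intro x hx y hy
      simp only [Finset.mem_sdiff, Finset.mem_insert, not_or] at hy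
      have hy' : y ∈ E \ S := Finset.mem_sdiff.2 ⟨hy.1, hy.2.2⟩
      rcases Finset.mem_insert.1 hx with rfl | hx
      · refine lt_of_le_of_ne (hmin y hy') fun h => hy.2.1 (hL _ hm'.1 _ hy.1 h).symm
      · exact hlt x hx y hy'

/-- Deleting at most `3` edges at each vertex, every surviving edge has three smaller
edges at each of its ends. -/
lemma exists_prune {V β : Type*} [DecidableEq V] [LinearOrder β] (W : Finset V)
    (E : Finset (Sym2 V)) (hW : ∀ e ∈ E, ∀ v ∈ e, v ∈ W) (L : Sym2 V → β)
    (hL : ∀ x ∈ E, ∀ y ∈ E, L x = L y → x = y) :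
    ∃ E' ⊆ E, E.card ≤ E'.card + 3 * W.card ∧
      ∀ e ∈ E', ∀ v ∈ e, ∃ D ⊆ E, D.card = 3 ∧ ∀ f ∈ D, v ∈ f ∧ L f < L e := by
  have key : ∀ v : V, ∃ D ⊆ E, D.card ≤ 3 ∧ ∀ e ∈ E \ D, v ∈ e →
      D.card = 3 ∧ ∀ f ∈ D, v ∈ f ∧ L f < L e := by
    intro v
    by_cases h : 3 ≤ (E.filter (v ∈ ·)).card
    · obtain ⟨S, hS, hc, hlt⟩ := exists_lowest L (E.filter (v ∈ ·))
        (fun x hx y hy => hL x (Finset.mem_filter.1 hx).1 y (Finset.mem_filter.1 hy).1) 3 h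
      refine ⟨S, fun x hx => (Finset.mem_filter.1 (hS hx)).1, hc.le, fun e he hv => ⟨hc, ?_⟩⟩
      intro f hf
      refine ⟨(Finset.mem_filter.1 (hS hf)).2, hlt f hf e ?_⟩
      simp only [Finset.mem_sdiff, Finset.mem_filter] at he ⊢
      exact ⟨⟨he.1, hv⟩, he.2⟩
    · refine ⟨E.filter (v ∈ ·), Finset.filter_subset _ _, by omega, ?_⟩
      intro e he hv
      simp only [Finset.mem_sdiff, Finset.mem_filter] at he
      exact absurd ⟨he.1, hv⟩ he.2
  choose D hD hc hlt using key
  refine ⟨E \ W.biUnion D, Finset.sdiff_subset, ?_, ?_⟩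
  · have h1 : (W.biUnion D).card ≤ W.card * 3 :=
      Finset.card_biUnion_le_card_mul _ _ _ fun v _ => hc v
    have h2 := Finset.card_le_card_sdiff_add_card (s := E) (t := W.biUnion D)
    omega
  · intro e he v hv
    simp only [Finset.mem_sdiff, Finset.mem_biUnion, not_exists, not_and] at he
    obtain ⟨h3, h4⟩ := hlt v e (Finset.mem_sdiff.2 ⟨he.1, he.2 v (hW e he.1 v hv)⟩) hv
    exact ⟨D v, hD v, h3, h4⟩

lemma upper_aux {V : Type*} [DecidableEq V] (L : Sym2 V → ℕ) (n : ℕ) :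
    ∀ (W : Finset V) (E : Finset (Sym2 V)), W.card = n → (∀ e ∈ E, ¬ e.IsDiag) →
    (∀ e ∈ E, ∀ v ∈ e, v ∈ W) → (∀ x ∈ E, ∀ y ∈ E, L x = L y → x = y) →
    (∀ a b c d e : V, [a, b, c, d, e].Nodup → s(a, b) ∈ E → s(b, c) ∈ E → s(c, d) ∈ E →
      s(d, e) ∈ E → L s(b, c) < L s(a, b) → L s(a, b) < L s(d, e) →
      L s(d, e) < L s(c, d) → False) →
    E.card ≤ 7 * n * Nat.log 2 n := by
  induction n using Nat.strong_induction_on with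
  | _ n ih =>
  intro W E hn hdiag hW hL hav
  by_cases hn2 : n < 2
  · have hE : E = ∅ := by
      rw [Finset.eq_empty_iff_forall_notMem]
      intro e he
      have h1 := hdiag e he
      have h2 := hW e he
      induction e with
      | _ x y =>
      refine h1 ?_
      have : W.card ≤ 1 := by omega
      exact Sym2.mk_isDiag_iff.2 (Finset.card_le_one.1 this x (h2 x (by simp)) y (h2 y (by simp)))
    simp [hE]
  obtain ⟨A, hAE, hAc, hAlt⟩ := exists_lowest L E hL (E.card / 2) (by omega)
  have hBE : E \ A ⊆ E := Finset.sdiff_subset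
  have hBc : (E \ A).card = E.card - E.card / 2 := by
    rw [Finset.card_sdiff_of_subset hAE, hAc]
  obtain ⟨A', hA'A, hA'c, hA'⟩ := exists_prune (β := ℕᵒᵈ) W A
    (fun e he => hW e (hAE he)) (fun e => OrderDual.toDual (L e))
    (fun x hx y hy h => hL x (hAE hx) y (hAE hy) (by simpa using h))
  obtain ⟨B', hB'B, hB'c, hB'⟩ := exists_prune W (E \ A)
    (fun e he => hW e (hBE he)) L
    (fun x hx y hy h => hL x (hBE hx) y (hBE hy) h)
  set W1 := W.filter (fun v => ∃ e ∈ A', v ∈ e) with hW1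
  set W2 := W.filter (fun v => ∃ e ∈ B', v ∈ e) with hW2
  have hdisj : Disjoint W1 W2 := by
    rw [Finset.disjoint_left]
    intro c hc1 hc2
    obtain ⟨_, e1, he1, hce1⟩ := Finset.mem_filter.1 hc1
    obtain ⟨_, e2, he2, hce2⟩ := Finset.mem_filter.1 hc2
    obtain ⟨b, rfl⟩ := hce1
    obtain ⟨d, rfl⟩ := hce2
    obtain ⟨D1, hD1, hD1c, hD1p⟩ := hA' _ he1 b (by simp)
    obtain ⟨D2, hD2, hD2c, hD2p⟩ := hB' _ he2 d (by simp)
    have hx : ∃ f ∈ D1, f ∉ ({s(b, d)} : Finset (Sym2 V)) := by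
      by_contra! hcon
      have := Finset.card_le_card (s := D1) (t := {s(b, d)}) hcon
      simp at this; omega
    obtain ⟨f, hf, hfn⟩ := hx
    obtain ⟨⟨a, rfl⟩, hfL⟩ := hD1p f hf
    have hy : ∃ g ∈ D2, g ∉ ({s(d, b), s(d, a)} : Finset (Sym2 V)) := by
      by_contra! hcon
      have := Finset.card_le_card (s := D2) (t := {s(d, b), s(d, a)}) hcon
      have := Finset.card_le_two (a := s(d, b)) (b := s(d, a))
      omega
    obtain ⟨g, hg, hgn⟩ := hy
    obtain ⟨⟨e, rfl⟩, hgL⟩ := hD2p g hg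
    have hbcA := hA'A he1
    have hbaA := hD1 hf
    have hcdB := hB'B he2
    have hdeB := hD2 hg
    have hlt := hAlt _ hbaA _ hdeB
    have hfL' : L s(c, b) < L s(b, a) := hfL
    have n1 := hdiag _ (hAE hbcA)
    have n2 := hdiag _ (hAE hbaA)
    have n3 := hdiag _ (hBE hcdB)
    have n4 := hdiag _ (hBE hdeB)
    rw [Sym2.mk_isDiag_iff] at n1 n2 n3 n4
    have hac : a ≠ c := by
      rintro rfl
      rw [Sym2.eq_swap] at hfL'
      exact lt_irrefl _ hfL'
    have hce : c ≠ e := by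
      rintro rfl
      rw [Sym2.eq_swap] at hgL
      exact lt_irrefl _ hgL
    have hbd : b ≠ d := by
      rintro rfl
      exact (Finset.mem_sdiff.1 hcdB).2 hbcA
    have had : a ≠ d := by
      rintro rfl; simp at hfn
    have hbe : b ≠ e := by
      rintro rfl; simp at hgn
    have hae : a ≠ e := by
      rintro rfl; simp at hgn
    refine hav a b c d e ?_ ?_ ?_ (hBE hcdB) (hBE hdeB) ?_ ?_ hgL
    · simp only [List.nodup_cons, List.mem_cons, List.not_mem_nil, not_or, or_false,
        List.nodup_nil, not_false_eq_true, and_true]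
      exact ⟨⟨Ne.symm n2, hac, had, hae⟩, ⟨Ne.symm n1, hbd, hbe⟩, ⟨n3, hce⟩, n4⟩
    · rw [Sym2.eq_swap]; exact hAE hbaA
    · rw [Sym2.eq_swap]; exact hAE hbcA
    · rw [Sym2.eq_swap (a := b) (b := c), Sym2.eq_swap (a := a) (b := b)]; exact hfL'
    · rw [Sym2.eq_swap (a := a) (b := b)]; exact hlt
  have hcard : W1.card + W2.card ≤ n := by
    rw [← Finset.card_union_of_disjoint hdisj, ← hn]
    exact Finset.card_le_card (Finset.union_subset (Finset.filter_subset _ _)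
      (Finset.filter_subset _ _))
  have step : ∀ (U : Finset V) (F : Finset (Sym2 V)), F ⊆ E →
      U = W.filter (fun v => ∃ e ∈ F, v ∈ e) → U.card ≤ n / 2 →
      F.card ≤ 7 * (n / 2) * Nat.log 2 (n / 2) := by
    intro U F hF hU hUc
    refine (ih U.card (by omega) U F rfl (fun e he => hdiag e (hF he)) ?_
      (fun x hx y hy => hL x (hF hx) y (hF hy)) ?_).trans ?_
    · intro e he v hv
      rw [hU]
      exact Finset.mem_filter.2 ⟨hW e (hF he) v hv, e, he, hv⟩
    · intro a b c d e h0 h1 h2 h3 h4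
      exact hav a b c d e h0 (hF h1) (hF h2) (hF h3) (hF h4)
    · exact Nat.mul_le_mul (Nat.mul_le_mul_left _ hUc) (Nat.log_mono_right hUc)
  have hmain : E.card ≤ 2 * (7 * (n / 2) * Nat.log 2 (n / 2)) + 6 * n + 1 := by
    by_cases h : W1.card ≤ n / 2
    · have := step W1 A' (hA'A.trans hAE) hW1 h
      omega
    · have := step W2 B' (hB'B.trans hBE) hW2 (by omega)
      omega
  have hlog : Nat.log 2 n = Nat.log 2 (n / 2) + 1 :=
    Nat.log_of_one_lt_of_le (by norm_num) (by omega)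
  rw [hlog]
  generalize Nat.log 2 (n / 2) = l at *
  have h2 : 2 * (n / 2) ≤ n := by omega
  have := Nat.mul_le_mul_right (7 * l) h2
  nlinarith

lemma P5_adj_iff (x y : Fin 5) : P5_2143.graph.Adj x y ↔
    ((x : ℕ) + 1 = y ∨ (y : ℕ) + 1 = x) := by
  simp only [P5_2143, pathEO, SimpleGraph.fromRel_adj, ne_eq]
  constructor
  · exact fun h => h.2
  · intro h
    refine ⟨?_, h⟩
    rintro rfl
    omega

lemma contains_iff (G : EOGraph) : G.Contains P5_2143 ↔
    ∃ a b c d e : Fin G.nv, [a, b, c, d, e].Nodup ∧ G.graph.Adj a b ∧ G.graph.Adj b c ∧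
      G.graph.Adj c d ∧ G.graph.Adj d e ∧ G.label s(b, c) < G.label s(a, b) ∧
      G.label s(a, b) < G.label s(d, e) ∧ G.label s(d, e) < G.label s(c, d) := by
  have l01 : P5_2143.label s((0 : Fin 5), (1 : Fin 5)) = 2 := rfl
  have l12 : P5_2143.label s((1 : Fin 5), (2 : Fin 5)) = 1 := rfl
  have l23 : P5_2143.label s((2 : Fin 5), (3 : Fin 5)) = 4 := rfl
  have l34 : P5_2143.label s((3 : Fin 5), (4 : Fin 5)) = 3 := rfl
  have a01 : P5_2143.graph.Adj (0 : Fin 5) (1 : Fin 5) := (P5_adj_iff _ _).2 (by decide)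
  have a12 : P5_2143.graph.Adj (1 : Fin 5) (2 : Fin 5) := (P5_adj_iff _ _).2 (by decide)
  have a23 : P5_2143.graph.Adj (2 : Fin 5) (3 : Fin 5) := (P5_adj_iff _ _).2 (by decide)
  have a34 : P5_2143.graph.Adj (3 : Fin 5) (4 : Fin 5) := (P5_adj_iff _ _).2 (by decide)
  constructor
  · rintro ⟨f, hadj, hlab⟩
    change Fin 5 ↪ Fin G.nv at f
    refine ⟨f 0, f 1, f 2, f 3, f 4, ?_, hadj _ _ a01, hadj _ _ a12, hadj _ _ a23,
      hadj _ _ a34, (hlab _ _ _ _ a12 a01).1 (by rw [l12, l01]; norm_num),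
      (hlab _ _ _ _ a01 a34).1 (by rw [l01, l34]; norm_num),
      (hlab _ _ _ _ a34 a23).1 (by rw [l34, l23]; norm_num)⟩
    simp [f.injective.eq_iff]
  · rintro ⟨a, b, c, d, e, hnd, hab, hbc, hcd, hde, h1, h2, h3⟩
    have hinj : Function.Injective (![a, b, c, d, e] : Fin 5 → Fin G.nv) := by
      have := List.nodup_iff_injective_get.1 hnd
      intro x y hxy
      apply this
      fin_cases x <;> fin_cases y <;> simpa using hxy
    refine ⟨⟨![a, b, c, d, e], hinj⟩, ?_, ?_⟩
    · intro x y hxy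
      change Fin 5 at x y
      rw [P5_adj_iff] at hxy
      fin_cases x <;> fin_cases y <;> first
        | (exfalso; revert hxy; decide)
        | assumption
        | (apply SimpleGraph.Adj.symm; assumption)
    · have key : ∀ x y : Fin 5, P5_2143.graph.Adj x y → ∃ m : Fin 4,
          P5_2143.label s(x, y) = (![1, 2, 3, 4] : Fin 4 → ℕ) m ∧
          G.label s((![a, b, c, d, e] : Fin 5 → Fin G.nv) x,
            (![a, b, c, d, e] : Fin 5 → Fin G.nv) y) =
          (![G.label s(b, c), G.label s(a, b), G.label s(d, e), G.label s(c, d)] :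
            Fin 4 → ℕ) m := by
        intro x y hxy
        rw [P5_adj_iff] at hxy
        fin_cases x <;> fin_cases y <;> first
          | (exfalso; revert hxy; decide)
          | exact ⟨0, rfl, rfl⟩
          | exact ⟨1, rfl, rfl⟩
          | exact ⟨2, rfl, rfl⟩
          | exact ⟨3, rfl, rfl⟩
          | exact ⟨0, rfl, congrArg G.label Sym2.eq_swap⟩
          | exact ⟨1, rfl, congrArg G.label Sym2.eq_swap⟩
          | exact ⟨2, rfl, congrArg G.label Sym2.eq_swap⟩
          | exact ⟨3, rfl, congrArg G.label Sym2.eq_swap⟩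
      intro x y z w hxy hzw
      obtain ⟨m, hm1, hm2⟩ := key x y hxy
      obtain ⟨p, hp1, hp2⟩ := key z w hzw
      refine (Eq.to_iff (congrArg₂ (· < ·) hm1 hp1)).trans
        (Iff.trans ?_ (Eq.to_iff (congrArg₂ (· < ·) hm2 hp2)).symm)
      fin_cases m <;> fin_cases p <;> simp <;> omega

lemma upper_edges (G : EOGraph) (hv : G.Valid) (ha : G.AvoidsFam {P5_2143}) :
    G.edges ≤ 7 * G.nv * Nat.log 2 G.nv := by
  classical
  have ha' := ha _ rfl
  rw [EOGraph.Avoids, contains_iff] at ha'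
  rw [EOGraph.edges, Set.ncard_eq_toFinset_card']
  refine upper_aux G.label G.nv Finset.univ _ (by simp) ?_ (by simp) ?_ ?_
  · intro e he
    exact G.graph.not_isDiag_of_mem_edgeSet (by simpa using he)
  · intro x hx y hy
    exact hv x (by simpa using hx) y (by simpa using hy)
  · intro a b c d e h0 h1 h2 h3 h4 h5 h6 h7
    exact ha' ⟨a, b, c, d, e, h0, by simpa using h1, by simpa using h2, by simpa using h3,
      by simpa using h4, h5, h6, h7⟩

/-- The sum of vertex weights over an edge. -/
def sumLabel {V : Type*} (T : V → ℕ) : Sym2 V → ℕ :=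
  Sym2.lift ⟨fun x y => T x + T y, fun _ _ => Nat.add_comm _ _⟩

@[simp] lemma sumLabel_mk {V : Type*} (T : V → ℕ) (x y : V) :
    sumLabel T s(x, y) = T x + T y := rfl

lemma lower_aux (k : ℕ) : ∃ (V : Type) (_ : Fintype V) (_ : DecidableEq V) (T : V → ℕ)
    (E : Finset (Sym2 V)), Fintype.card V = 2 ^ k ∧ Function.Injective T ∧
    (∀ x, 2 * T x < 3 ^ k) ∧ 2 * E.card = k * 2 ^ k ∧ (∀ e ∈ E, ¬ e.IsDiag) ∧
    (∀ e ∈ E, ∀ f ∈ E, sumLabel T e = sumLabel T f → e = f) ∧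
    ∀ a b c d e : V, s(a, b) ∈ E → s(b, c) ∈ E → s(c, d) ∈ E → s(d, e) ∈ E →
      T b + T c < T a + T b → T a + T b < T d + T e → T d + T e < T c + T d → False := by
  induction k with
  | zero =>
    refine ⟨Unit, inferInstance, inferInstance, fun _ => 0, ∅, by simp, ?_, by simp, by simp,
      by simp, by simp, by simp⟩
    intro x y _; rfl
  | succ k ih =>
    obtain ⟨V, _, _, T, E, hV, hT, hlt, hE, hdiag, hinj, hav⟩ := ih
    let T' : V ⊕ V → ℕ := Sum.elim T (fun x => T x + 3 ^ k)
    let i1 : Sym2 V ↪ Sym2 (V ⊕ V) := Function.Embedding.sym2Map ⟨Sum.inl, Sum.inl_injective⟩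
    let i2 : Sym2 V ↪ Sym2 (V ⊕ V) := Function.Embedding.sym2Map ⟨Sum.inr, Sum.inr_injective⟩
    let g : V ↪ Sym2 (V ⊕ V) := ⟨fun x => s(Sum.inl x, Sum.inr x), by
      intro x y h; simpa using h⟩
    have gdef : ∀ x, g x = s(Sum.inl x, Sum.inr x) := fun _ => rfl
    have t1 : ∀ e, sumLabel T' (i1 e) = sumLabel T e := by
      intro e; induction e with | _ x y => rfl
    have t2 : ∀ e, sumLabel T' (i2 e) = sumLabel T e + 2 * 3 ^ k := by
      intro e; induction e with | _ x y => 
        show T x + 3 ^ k + (T y + 3 ^ k) = T x + T y + 2 * 3 ^ k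
        ring
    have tg : ∀ x, sumLabel T' (g x) = 2 * T x + 3 ^ k := by
      intro x
      show T x + (T x + 3 ^ k) = 2 * T x + 3 ^ k
      ring
    have tl : ∀ e, sumLabel T e < 3 ^ k := by
      intro e; induction e with | _ x y =>
        have := hlt x
        have := hlt y
        simp only [sumLabel_mk]; omega
    have d12 : Disjoint (E.map i1) (Finset.univ.map g) := by
      rw [Finset.disjoint_left]
      intro e h1 h2
      obtain ⟨x, _, rfl⟩ := Finset.mem_map.1 h1
      obtain ⟨y, _, hy⟩ := Finset.mem_map.1 h2
      have h := congrArg (sumLabel T') hy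
      rw [t1, tg] at h
      have := tl x
      omega
    have d3 : Disjoint (E.map i1 ∪ Finset.univ.map g) (E.map i2) := by
      rw [Finset.disjoint_left]
      intro e h1 h2
      obtain ⟨y, _, rfl⟩ := Finset.mem_map.1 h2
      rcases Finset.mem_union.1 h1 with h1 | h1
      · obtain ⟨x, _, hx⟩ := Finset.mem_map.1 h1
        have h := congrArg (sumLabel T') hx
        rw [t1, t2] at h
        have := tl x
        omega
      · obtain ⟨x, _, hx⟩ := Finset.mem_map.1 h1
        have h := congrArg (sumLabel T') hx
        rw [tg, t2] at h
        have := hlt x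
        omega
    have mem : ∀ e, e ∈ (E.map i1 ∪ Finset.univ.map g) ∪ E.map i2 →
        (∃ x ∈ E, i1 x = e) ∨ (∃ x, g x = e) ∨ (∃ x ∈ E, i2 x = e) := by
      intro e he
      simp only [Finset.mem_union, Finset.mem_map, Finset.mem_univ, true_and] at he
      rcases he with (h | h) | h
      · exact Or.inl h
      · exact Or.inr (Or.inl h)
      · exact Or.inr (Or.inr h)
    have mll : ∀ x y : V, s((Sum.inl x : V ⊕ V), Sum.inl y) ∈
        (E.map i1 ∪ Finset.univ.map g) ∪ E.map i2 → s(x, y) ∈ E := by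
      intro x y h
      rcases mem _ h with ⟨e, he, h⟩ | ⟨e, h⟩ | ⟨e, he, h⟩
      · have : i1 e = i1 s(x, y) := h
        rwa [← i1.injective this]
      · rw [gdef] at h; simp at h
      · induction e with | _ u v => simp [i2] at h
    have mrr : ∀ x y : V, s((Sum.inr x : V ⊕ V), Sum.inr y) ∈
        (E.map i1 ∪ Finset.univ.map g) ∪ E.map i2 → s(x, y) ∈ E := by
      intro x y h
      rcases mem _ h with ⟨e, he, h⟩ | ⟨e, h⟩ | ⟨e, he, h⟩
      · induction e with | _ u v => simp [i1] at h
      · rw [gdef] at h; simp at h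
      · have : i2 e = i2 s(x, y) := h
        rwa [← i2.injective this]
    have mlr : ∀ x y : V, s((Sum.inl x : V ⊕ V), Sum.inr y) ∈
        (E.map i1 ∪ Finset.univ.map g) ∪ E.map i2 → x = y := by
      intro x y h
      rcases mem _ h with ⟨e, he, h⟩ | ⟨e, h⟩ | ⟨e, he, h⟩
      · induction e with | _ u v => simp [i1] at h
      · rw [gdef] at h; simp at h; rw [← h.1, ← h.2]
      · induction e with | _ u v => simp [i2] at h
    have mrl : ∀ x y : V, s((Sum.inr x : V ⊕ V), Sum.inl y) ∈
        (E.map i1 ∪ Finset.univ.map g) ∪ E.map i2 → y = x := by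
      intro x y h
      rw [Sym2.eq_swap] at h
      exact mlr _ _ h
    refine ⟨V ⊕ V, inferInstance, inferInstance, T',
      (E.map i1 ∪ Finset.univ.map g) ∪ E.map i2, ?_, ?_, ?_, ?_, ?_, ?_, ?_⟩
    · rw [Fintype.card_sum, hV]; ring
    · rintro (x | x) (y | y) h
      · exact congrArg _ (hT h)
      · have h' : T x = T y + 3 ^ k := h
        have := hlt x
        omega
      · have h' : T x + 3 ^ k = T y := h
        have := hlt y
        omega
      · have h' : T x + 3 ^ k = T y + 3 ^ k := h
        exact congrArg _ (hT (by omega))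
    · rintro (x | x)
      · show 2 * T x < 3 ^ (k + 1)
        have := hlt x
        rw [pow_succ]; omega
      · show 2 * (T x + 3 ^ k) < 3 ^ (k + 1)
        have := hlt x
        rw [pow_succ]; omega
    · rw [Finset.card_union_of_disjoint d3, Finset.card_union_of_disjoint d12]
      simp only [Finset.card_map, Finset.card_univ, hV]
      rw [pow_succ]
      linarith
    · intro e he
      rcases mem _ he with ⟨e, he', rfl⟩ | ⟨e, rfl⟩ | ⟨e, he', rfl⟩
      · have := hdiag e he'
        clear he
        induction e with | _ u v => simpa [i1] using this
      · rw [gdef]; simp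
      · have := hdiag e he'
        clear he
        induction e with | _ u v => simpa [i2] using this
    · intro e he f hf h
      rcases mem _ he with ⟨e, he', rfl⟩ | ⟨e, rfl⟩ | ⟨e, he', rfl⟩ <;>
      rcases mem _ hf with ⟨f, hf', rfl⟩ | ⟨f, rfl⟩ | ⟨f, hf', rfl⟩ <;>
      simp only [t1, t2, tg] at h
      · rw [hinj e he' f hf' h]
      · have := tl e
        omega
      · have := tl e
        omega
      · have := tl f
        omega
      · rw [hT (show T e = T f by omega)]
      · have := hlt e
        omega
      · have := tl f
        omega
      · have := hlt f
        omega
      · rw [hinj e he' f hf' (by omega)]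
    · intro a b c d e h1 h2 h3 h4 h5 h6 h7
      have eL : ∀ x, T' (Sum.inl x) = T x := fun _ => rfl
      have eR : ∀ x, T' (Sum.inr x) = T x + 3 ^ k := fun _ => rfl
      rcases a with a | a <;> rcases b with b | b <;> rcases c with c | c <;>
      rcases d with d | d <;> rcases e with e | e <;>
      simp only [eL, eR] at h5 h6 h7 <;>
      (first | replace h1 := mll _ _ h1 | replace h1 := mrr _ _ h1 | replace h1 := mlr _ _ h1 | replace h1 := mrl _ _ h1) <;>
      (first | replace h2 := mll _ _ h2 | replace h2 := mrr _ _ h2 | replace h2 := mlr _ _ h2 | replace h2 := mrl _ _ h2) <;>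
      (first | replace h3 := mll _ _ h3 | replace h3 := mrr _ _ h3 | replace h3 := mlr _ _ h3 | replace h3 := mrl _ _ h3) <;>
      (first | replace h4 := mll _ _ h4 | replace h4 := mrr _ _ h4 | replace h4 := mlr _ _ h4 | replace h4 := mrl _ _ h4) <;>
      (first
        | exact hav a b c d e h1 h2 h3 h4 (by omega) (by omega) (by omega)
        | (have ha := hlt a
           have hb := hlt b
           have hc := hlt c
           have hd := hlt d
           have he := hlt e
           clear mem mll mrr mlr mrl hav hinj hdiag t1 t2 tg tl d12 d3 eL eR
           clear_value T' i1 i2 g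
           subst_vars
           omega))

lemma lower_graph (n k : ℕ) (h : 2 ^ k ≤ n) : ∃ G : EOGraph, G.nv = n ∧ G.Valid ∧
    G.AvoidsFam {P5_2143} ∧ 2 * G.edges = k * 2 ^ k := by
  obtain ⟨V, _, _, T, E, hV, hT, hlt, hE, hdiag, hinj, hav⟩ := lower_aux k
  obtain ⟨φ⟩ : Nonempty (V ↪ Fin n) := Function.Embedding.nonempty_of_card_le (by simpa [hV] using h)
  let T' : Fin n → ℕ := Function.extend φ T 0
  have hT' : ∀ v, T' (φ v) = T v := fun v => φ.injective.extend_apply _ _ _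
  let F : Finset (Sym2 (Fin n)) := E.map φ.sym2Map
  have hlab : ∀ e, sumLabel T' (φ.sym2Map e) = sumLabel T e := by
    intro e
    induction e with | _ x y =>
      show T' (φ x) + T' (φ y) = T x + T y
      rw [hT', hT']
  have hFd : ∀ e ∈ F, ¬ e.IsDiag := by
    intro e he
    obtain ⟨e, he', rfl⟩ := Finset.mem_map.1 he
    have := hdiag e he'
    clear he
    induction e with | _ u v => simpa using this
  let G : EOGraph := ⟨n, SimpleGraph.fromEdgeSet (F : Set (Sym2 (Fin n))), sumLabel T'⟩
  have hes : G.graph.edgeSet = (F : Set (Sym2 (Fin n))) := by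
    show (SimpleGraph.fromEdgeSet (F : Set (Sym2 (Fin n)))).edgeSet = _
    rw [SimpleGraph.edgeSet_fromEdgeSet]
    ext e
    simp only [Set.mem_sdiff, Finset.mem_coe]
    exact ⟨fun h => h.1, fun h => ⟨h, hFd e h⟩⟩
  refine ⟨G, rfl, ?_, ?_, ?_⟩
  · intro e he f hf hef
    rw [hes] at he hf
    obtain ⟨e, he', rfl⟩ := Finset.mem_map.1 he
    obtain ⟨f, hf', rfl⟩ := Finset.mem_map.1 hf
    have hef' : sumLabel T' (φ.sym2Map e) = sumLabel T' (φ.sym2Map f) := hef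
    rw [hlab, hlab] at hef'
    rw [hinj e he' f hf' hef']
  · intro H hH
    rw [Set.mem_singleton_iff] at hH
    subst hH
    rw [EOGraph.Avoids, contains_iff]
    rintro ⟨a, b, c, d, e, -, h1, h2, h3, h4, h5, h6, h7⟩
    have pull : ∀ x y : Fin n, G.graph.Adj x y → ∃ u v, φ u = x ∧ φ v = y ∧ s(u, v) ∈ E := by
      intro x y hxy
      have : s(x, y) ∈ (F : Set (Sym2 (Fin n))) := by
        rw [← hes]; exact hxy
      obtain ⟨e, he, h⟩ := Finset.mem_map.1 this
      induction e with | _ u v =>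
        have h' : s(φ u, φ v) = s(x, y) := h
        rcases Sym2.eq_iff.1 h' with ⟨h1, h2⟩ | ⟨h1, h2⟩
        · exact ⟨u, v, h1, h2, he⟩
        · exact ⟨v, u, h2, h1, by rwa [Sym2.eq_swap]⟩
    obtain ⟨a, b, rfl, rfl, k1⟩ := pull _ _ h1
    obtain ⟨b', c, hb, rfl, k2⟩ := pull _ _ h2
    obtain ⟨c', d, hc, rfl, k3⟩ := pull _ _ h3
    obtain ⟨d', e, hd, rfl, k4⟩ := pull _ _ h4
    obtain rfl := φ.injective hb
    obtain rfl := φ.injective hc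
    obtain rfl := φ.injective hd
    have lab : ∀ x y : V, G.label s(φ x, φ y) = T x + T y := fun x y => hlab s(x, y)
    rw [lab, lab] at h5 h6 h7
    exact hav _ _ _ _ _ k1 k2 k3 k4 h5 h6 h7
  · rw [EOGraph.edges, hes, Set.ncard_coe_finset, Finset.card_map, hE]

/-- `lex(n, P_5^{2143}) = Θ(n log n)`. -/
theorem lex_P5_2143 :
    ∃ c C : ℝ, 0 < c ∧ 0 < C ∧ ∀ n : ℕ, 2 ≤ n →
      c * (n : ℝ) * Real.logb 2 (n : ℝ) ≤ (lexFam n {P5_2143} : ℝ) ∧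
      (lexFam n {P5_2143} : ℝ) ≤ C * (n : ℝ) * Real.logb 2 (n : ℝ) := by
  refine ⟨1 / 8, 7, by norm_num, by norm_num, fun n hn => ?_⟩
  have hub : ∀ m ∈ {m : ℕ | ∃ G : EOGraph, G.nv = n ∧ G.Valid ∧ G.AvoidsFam {P5_2143} ∧
      G.edges = m}, m ≤ 7 * n * Nat.log 2 n := by
    rintro m ⟨G, rfl, hv, ha, rfl⟩
    exact upper_edges G hv ha
  have hpow : 2 ^ Nat.log 2 n ≤ n := Nat.pow_log_le_self 2 (by omega)
  have hpow' : n < 2 ^ (Nat.log 2 n + 1) := Nat.lt_pow_succ_log_self (by norm_num) n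
  have hk1 : 1 ≤ Nat.log 2 n := Nat.log_pos (by norm_num) hn
  obtain ⟨G, h1, h2, h3, h4⟩ := lower_graph n _ hpow
  have hmem : G.edges ∈ {m : ℕ | ∃ G : EOGraph, G.nv = n ∧ G.Valid ∧ G.AvoidsFam {P5_2143} ∧
      G.edges = m} := ⟨G, h1, h2, h3, rfl⟩
  have hlo : G.edges ≤ lexFam n {P5_2143} := le_csSup ⟨_, hub⟩ hmem
  have hhi : lexFam n {P5_2143} ≤ 7 * n * Nat.log 2 n := csSup_le ⟨_, hmem⟩ hub
  have hn0 : (0 : ℝ) < n := by positivity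
  generalize Nat.log 2 n = k at *
  have hk : (k : ℝ) ≤ Real.logb 2 n := by
    rw [Real.le_logb_iff_rpow_le (by norm_num) hn0, Real.rpow_natCast]
    exact_mod_cast hpow
  have hk' : Real.logb 2 n ≤ k + 1 := by
    rw [Real.logb_le_iff_le_rpow (by norm_num) hn0]
    have : (n : ℝ) ≤ 2 ^ (k + 1) := by exact_mod_cast hpow'.le
    rw [← Real.rpow_natCast] at this
    exact_mod_cast this
  constructor
  · have e1 : (2 : ℝ) * G.edges = k * 2 ^ k := by exact_mod_cast h4
    have e2 : (G.edges : ℝ) ≤ lexFam n {P5_2143} := by exact_mod_cast hlo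
    have e3 : (n : ℝ) ≤ 2 * 2 ^ k := by
      have : (n : ℝ) ≤ 2 ^ (k + 1) := by exact_mod_cast hpow'.le
      rw [pow_succ] at this
      linarith
    have e4 : (1 : ℝ) ≤ k := by exact_mod_cast hk1
    have e5 : (n : ℝ) * Real.logb 2 n ≤ (2 * 2 ^ k) * (2 * k) :=
      mul_le_mul e3 (by linarith) (by linarith) (by positivity)
    nlinarith
  · have e1 : (lexFam n {P5_2143} : ℝ) ≤ 7 * n * k := by exact_mod_cast hhi
    exact e1.trans (by gcongr)
end

section
/- lex(n, P_5^{1432}) = Θ(n log n); that is, there exist constants c, C > 0 such that for all n ≥ 2, c·n·log n ≤ lex(n, P_5^{1432}) ≤ C·n·log n. -/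
/-- The edge-ordered path `P_5^{1432}`: edge-order `ab < de < cd < bc`. -/
def P5_1432 : EOGraph := pathEO 5 [1, 4, 3, 2]

/-- The level at which two naturals merge in the dyadic tree. -/
noncomputable def sepLv (q f : ℕ) : ℕ := sInf {k | q / 2 ^ k = f / 2 ^ k}

theorem sepLv_spec (q f : ℕ) : q / 2 ^ sepLv q f = f / 2 ^ sepLv q f := by
  have : sepLv q f ∈ {k | q / 2 ^ k = f / 2 ^ k} := by
    apply Nat.sInf_mem
    refine ⟨q + f, ?_⟩
    have h : q + f < 2 ^ (q + f) := Nat.lt_two_pow_self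
    show q / 2 ^ (q + f) = f / 2 ^ (q + f)
    rw [Nat.div_eq_of_lt (by omega), Nat.div_eq_of_lt (by omega)]
  exact this

theorem sepLv_le {q f k : ℕ} (h : q / 2 ^ k = f / 2 ^ k) : sepLv q f ≤ k :=
  Nat.sInf_le h

theorem sepLv_ne {q f k : ℕ} (h : k < sepLv q f) : q / 2 ^ k ≠ f / 2 ^ k := fun h' =>
  absurd (sepLv_le h') (by omega)

theorem sepLv_le_of_lt {q f L : ℕ} (hq : q < 2 ^ L) (hf : f < 2 ^ L) : sepLv q f ≤ L :=
  sepLv_le (by rw [Nat.div_eq_of_lt hq, Nat.div_eq_of_lt hf])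

theorem div_two_pow_mono {q f k j : ℕ} (hk : k ≤ j) (h : q / 2 ^ k = f / 2 ^ k) :
    q / 2 ^ j = f / 2 ^ j := by
  obtain ⟨i, rfl⟩ := Nat.exists_eq_add_of_le hk
  rw [pow_add, ← Nat.div_div_eq_div_mul, ← Nat.div_div_eq_div_mul, h]

theorem sepLv_A {q e1 e2 k : ℕ} (h1 : q ≤ e1) (h2 : e1 < e2) (hk1 : sepLv q e1 = k)
    (hk2 : sepLv q e2 = k) : sepLv e1 e2 < k := by
  have s1 := sepLv_spec q e1
  have s2 := sepLv_spec q e2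
  rw [hk1] at s1
  rw [hk2] at s2
  cases k with
  | zero => simp at s1 s2; omega
  | succ j =>
    have n1 := sepLv_ne (q := q) (f := e1) (k := j) (by omega)
    have n2 := sepLv_ne (q := q) (f := e2) (k := j) (by omega)
    have m1 : q / 2 ^ j ≤ e1 / 2 ^ j := Nat.div_le_div_right h1
    have m2 : e1 / 2 ^ j ≤ e2 / 2 ^ j := Nat.div_le_div_right h2.le
    rw [pow_succ, ← Nat.div_div_eq_div_mul, ← Nat.div_div_eq_div_mul] at s1 s2
    have : e1 / 2 ^ j = e2 / 2 ^ j := by omega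
    have := sepLv_le this
    omega

theorem sepLv_B {q1 f1 g q2 f2 k : ℕ} (h1 : q1 ≤ f1) (hg : g ≤ q2) (h2 : q2 ≤ f1) (h3 : f1 < f2)
    (hk1 : sepLv q1 f1 = k) (hk2 : sepLv q2 f2 = k) (hgk : sepLv g f1 < k) : False := by
  have s1 := sepLv_spec q1 f1
  have s2 := sepLv_spec q2 f2
  rw [hk1] at s1
  rw [hk2] at s2
  cases k with
  | zero => omega
  | succ j =>
    have n1 := sepLv_ne (q := q1) (f := f1) (k := j) (by omega)
    have n2 := sepLv_ne (q := q2) (f := f2) (k := j) (by omega)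
    have s3 : g / 2 ^ j = f1 / 2 ^ j := div_two_pow_mono (by omega) (sepLv_spec g f1)
    have m1 : q1 / 2 ^ j ≤ f1 / 2 ^ j := Nat.div_le_div_right h1
    have m2 : g / 2 ^ j ≤ q2 / 2 ^ j := Nat.div_le_div_right hg
    have m3 : q2 / 2 ^ j ≤ f1 / 2 ^ j := Nat.div_le_div_right h2
    have m4 : f1 / 2 ^ j ≤ f2 / 2 ^ j := Nat.div_le_div_right h3.le
    rw [pow_succ, ← Nat.div_div_eq_div_mul, ← Nat.div_div_eq_div_mul] at s1 s2
    omega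

open Classical in
theorem exists_threshold {V : Type} [Fintype V] (adj : V → V → Prop) (r : V → V → ℕ) (N : ℕ)
    (hinj : ∀ b x y, adj b x → adj b y → r b x = r b y → x = y) (c : V) :
    ∃ t : ℕ, t ≤ N ∧ (3 ≤ (Finset.univ.filter fun x => adj c x ∧ r c x < t).card ∨ t = N) ∧
      (Finset.univ.filter fun x => adj c x ∧ r c x < t).card ≤ 3 := by
  have hex : ∃ t : ℕ, 3 ≤ (Finset.univ.filter fun x => adj c x ∧ r c x < t).card ∨ t = N :=
    ⟨N, Or.inr rfl⟩
  refine ⟨Nat.find hex, Nat.find_min' hex (Or.inr rfl), Nat.find_spec hex, ?_⟩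
  rcases Nat.eq_zero_or_pos (Nat.find hex) with h0 | h0
  · rw [h0]; simp
  · have hm := Nat.find_min hex (m := Nat.find hex - 1) (by omega)
    push Not at hm
    have hm := hm.1
    set t := Nat.find hex
    have hsub : (Finset.univ.filter fun x => adj c x ∧ r c x < t) ⊆
        (Finset.univ.filter fun x => adj c x ∧ r c x < t - 1) ∪
        (Finset.univ.filter fun x => adj c x ∧ r c x = t - 1) := by
      intro x
      simp only [Finset.mem_union, Finset.mem_filter, Finset.mem_univ, true_and]
      rintro ⟨h1, h2⟩
      by_cases h : r c x = t - 1
      · exact Or.inr ⟨h1, h⟩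
      · exact Or.inl ⟨h1, by omega⟩
    have h1 : (Finset.univ.filter fun x => adj c x ∧ r c x = t - 1).card ≤ 1 := by
      rw [Finset.card_le_one]
      intro x hx y hy
      simp only [Finset.mem_filter, Finset.mem_univ, true_and] at hx hy
      exact hinj c x y hx.1 hy.1 (hx.2.trans hy.2.symm)
    have := Finset.card_le_card hsub
    have := Finset.card_union_le (Finset.univ.filter fun x => adj c x ∧ r c x < t - 1)
      (Finset.univ.filter fun x => adj c x ∧ r c x = t - 1)
    omega

/-- Among three numbers attached injectively, some can be sorted. -/
theorem sort_three {α : Type} (P : α → Prop) (f : α → ℕ) (x y z : α) (hx : P x) (hy : P y)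
    (hz : P z) (h1 : f x ≠ f y) (h2 : f x ≠ f z) (h3 : f y ≠ f z) :
    ∃ a b c, P a ∧ P b ∧ P c ∧ f a < f b ∧ f b < f c := by
  rcases lt_or_gt_of_ne h1 with h1 | h1 <;> rcases lt_or_gt_of_ne h2 with h2 | h2 <;>
    rcases lt_or_gt_of_ne h3 with h3 | h3
  · exact ⟨x, y, z, hx, hy, hz, h1, h3⟩
  · exact ⟨x, z, y, hx, hz, hy, h2, h3⟩
  · omega
  · exact ⟨z, x, y, hz, hx, hy, h2, h1⟩
  · exact ⟨y, x, z, hy, hx, hz, h1, h2⟩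
  · omega
  · exact ⟨y, z, x, hy, hz, hx, h3, h2⟩
  · exact ⟨z, y, x, hz, hy, hx, h3, h1⟩

open Classical in
theorem core_bound {V : Type} [Fintype V] (adj : V → V → Prop) (r : V → V → ℕ) (L : ℕ)
    (hinj : ∀ b x y, adj b x → adj b y → r b x = r b y → x = y)
    (hsymm : ∀ x y, adj x y → adj y x) (hirr : ∀ x, ¬ adj x x)
    (rsymm : ∀ x y, r x y = r y x) (hlt : ∀ x y, adj x y → r x y < 2 ^ L)
    (hav : ∀ z x b c y, adj z x → adj x b → adj b c → adj c y → z ≠ x → z ≠ b → z ≠ c → z ≠ y →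
      x ≠ b → x ≠ c → x ≠ y → b ≠ c → b ≠ y → c ≠ y → r z x < r c y → r c y < r b c →
      r b c < r x b → False) :
    ∃ D : Finset (V × V), (∀ x y, adj x y → (x, y) ∈ D ∨ (y, x) ∈ D) ∧
      D.card ≤ 3 * Fintype.card V * (L + 2) := by
  choose q hqN hq3 hqc using exists_threshold adj r (2 ^ L) hinj
  let D : Finset (V × V) := Finset.univ.filter fun p => adj p.1 p.2 ∧ q p.2 ≤ q p.1
  let good : V × V → Prop := fun p => ∃ y1 y2, y1 ≠ y2 ∧ adj p.2 y1 ∧ adj p.2 y2 ∧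
    r p.2 y1 < r p.1 p.2 ∧ r p.2 y2 < r p.1 p.2 ∧
    sepLv (r p.2 y1) (r p.1 p.2) < sepLv (q p.2) (r p.1 p.2) ∧
    sepLv (r p.2 y2) (r p.1 p.2) < sepLv (q p.2) (r p.1 p.2)
  let D0 := D.filter fun p => r p.1 p.2 < q p.1
  let DA := D.filter fun p => q p.1 ≤ r p.1 p.2 ∧ ¬ good p
  let DB := D.filter fun p => q p.1 ≤ r p.1 p.2 ∧ good p
  refine ⟨D, ?_, ?_⟩
  · intro x y h
    rcases le_total (q y) (q x) with h' | h'
    · left; simp [D, h, h']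
    · right; simp [D, hsymm _ _ h, h']
  have hD : D ⊆ D0 ∪ (DA ∪ DB) := by
    intro p hp
    simp only [D0, DA, DB, Finset.mem_union, Finset.mem_filter, hp, true_and]
    by_cases h : r p.1 p.2 < q p.1
    · exact Or.inl h
    · by_cases g : good p
      · exact Or.inr (Or.inr ⟨by omega, g⟩)
      · exact Or.inr (Or.inl ⟨by omega, g⟩)
  have c0 : D0.card ≤ 3 * (Finset.univ : Finset V).card := by
    apply Finset.card_le_mul_card_image_of_maps_to (f := Prod.fst) (fun _ _ => Finset.mem_univ _)
    intro b _
    refine le_trans ?_ (hqc b)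
    apply Finset.card_le_card_of_injOn Prod.snd
    · rintro ⟨b', c⟩ h
      simp only [D0, D, Finset.coe_filter, Finset.mem_filter, Finset.mem_univ, true_and, Set.mem_ofPred_eq] at h ⊢
      obtain ⟨⟨⟨h1, h2⟩, h3⟩, rfl⟩ := h
      exact ⟨h1, h3⟩
    · rintro ⟨b', c⟩ h ⟨b'', c'⟩ h' h3
      simp only [Finset.coe_filter, Set.mem_ofPred_eq] at h h' h3
      rw [h.2, h'.2, h3]
  let T : Finset (V × ℕ) := Finset.univ ×ˢ Finset.range (L + 1)
  have hT : T.card = Fintype.card V * (L + 1) := by simp [T]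
  -- levels are bounded
  have hlev : ∀ p ∈ D, q p.1 ≤ r p.1 p.2 → sepLv (q p.2) (r p.1 p.2) ∈ Finset.range (L + 1) := by
    intro p hp hqr
    simp only [D, Finset.mem_filter, Finset.mem_univ, true_and] at hp
    rw [Finset.mem_range]
    have hl := hlt _ _ hp.1
    have := sepLv_le_of_lt (lt_of_le_of_lt (hp.2.trans hqr) hl) hl
    omega
  have cA : DA.card ≤ 2 * T.card := by
    apply Finset.card_le_mul_card_image_of_maps_to
      (f := fun p : V × V => (p.2, sepLv (q p.2) (r p.1 p.2)))
    · intro p hp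
      exact Finset.mem_product.2 ⟨Finset.mem_univ _, hlev p (Finset.mem_filter.1 hp).1 (Finset.mem_filter.1 hp).2.1⟩
    rintro ⟨c, k⟩ _
    by_contra hcon
    push Not at hcon
    obtain ⟨x, y, z, hx, hy, hz, hxy, hxz, hyz⟩ := Finset.two_lt_card_iff.1 hcon
    have key : ∀ p ∈ DA.filter (fun p => (p.2, sepLv (q p.2) (r p.1 p.2)) = (c, k)),
        p.2 = c ∧ adj c p.1 ∧ q c ≤ r c p.1 ∧ sepLv (q c) (r c p.1) = k ∧ ¬ good p := by
      rintro ⟨b, c'⟩ hp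
      simp only [DA, D, Finset.mem_filter, Finset.mem_univ, true_and, Prod.mk.injEq] at hp
      obtain ⟨⟨⟨h1, h2⟩, h3, h4⟩, rfl, h5⟩ := hp
      refine ⟨rfl, hsymm _ _ h1, ?_, ?_, h4⟩
      · rw [rsymm c' b]; exact h2.trans h3
      · rw [rsymm c' b]; exact h5
    have hne : ∀ p p' : V × V, p ∈ DA.filter (fun p => (p.2, sepLv (q p.2) (r p.1 p.2)) = (c, k)) →
        p' ∈ DA.filter (fun p => (p.2, sepLv (q p.2) (r p.1 p.2)) = (c, k)) → p ≠ p' →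
        r c p.1 ≠ r c p'.1 := by
      intro p p' hp hp' h1 h2
      have a1 := key p hp
      have a2 := key p' hp'
      exact h1 (Prod.ext (hinj c _ _ a1.2.1 a2.2.1 h2) (a1.1.trans a2.1.symm))
    obtain ⟨u, v, w, hu, hv, hw, huv, hvw⟩ := sort_three
      (fun p => p ∈ DA.filter (fun p => (p.2, sepLv (q p.2) (r p.1 p.2)) = (c, k)))
      (fun p => r c p.1) x y z hx hy hz (hne _ _ hx hy hxy) (hne _ _ hx hz hxz) (hne _ _ hy hz hyz)
    obtain ⟨u2, ua, uq, us, -⟩ := key u hu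
    obtain ⟨v2, va, vq, vs, -⟩ := key v hv
    obtain ⟨w2, wa, wq, ws, wg⟩ := key w hw
    apply wg
    refine ⟨u.1, v.1, ?_, ?_⟩
    · intro h; rw [h] at huv; exact lt_irrefl _ huv
    rw [w2, rsymm w.1 c]
    refine ⟨ua, va, huv.trans hvw, hvw, ?_, ?_⟩
    · rw [ws]; exact sepLv_A uq (huv.trans hvw) us ws
    · rw [ws]; exact sepLv_A vq hvw vs ws
  have cB : DB.card ≤ 1 * T.card := by
    apply Finset.card_le_mul_card_image_of_maps_to
      (f := fun p : V × V => (p.1, sepLv (q p.2) (r p.1 p.2)))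
    · intro p hp
      exact Finset.mem_product.2 ⟨Finset.mem_univ _, hlev p (Finset.mem_filter.1 hp).1 (Finset.mem_filter.1 hp).2.1⟩
    rintro ⟨b, k⟩ _
    have main : ∀ c1 c2, adj b c1 → adj b c2 → q c1 ≤ q b → q c2 ≤ q b → q b ≤ r b c1 →
        q b ≤ r b c2 → sepLv (q c1) (r b c1) = k → sepLv (q c2) (r b c2) = k → good (b, c1) →
        r b c1 < r b c2 → False := by
      rintro c1 c2 a1 a2 q1 q2 f1 f2 s1 s2 ⟨y1, y2, hy, ay1, ay2, ry1, ry2, sy1, sy2⟩ hlt12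
      simp only at ay1 ay2 ry1 ry2 sy1 sy2
      have hc12 : c1 ≠ c2 := by rintro rfl; exact lt_irrefl _ hlt12
      obtain ⟨y, hyc, ay, ry, sy⟩ : ∃ y, y ≠ c2 ∧ adj c1 y ∧ r c1 y < r b c1 ∧
          sepLv (r c1 y) (r b c1) < k := by
        by_cases h : y1 = c2
        · exact ⟨y2, fun h' => hy (h.trans h'.symm), ay2, ry2, s1 ▸ sy2⟩
        · exact ⟨y1, h, ay1, ry1, s1 ▸ sy1⟩
      have hg : r c1 y ≤ q c2 := by
        by_contra hlt2
        push Not at hlt2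
        have h3 : 3 ≤ (Finset.univ.filter fun x => adj c2 x ∧ r c2 x < q c2).card := by
          rcases hq3 c2 with h | h
          · exact h
          · have := hlt b c2 a2
            omega
        obtain ⟨z, hz, hz'⟩ : ∃ z ∈ (Finset.univ.filter fun x => adj c2 x ∧ r c2 x < q c2),
            z ∉ ({y, c1} : Finset V) := by
          apply Finset.exists_mem_notMem_of_card_lt_card
          exact lt_of_le_of_lt Finset.card_le_two (by omega)
        simp only [Finset.mem_filter, Finset.mem_univ, true_and, Finset.mem_insert,
          Finset.mem_singleton, not_or] at hz hz'
        have nadj : ∀ {u v}, adj u v → u ≠ v := by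
          rintro u v h rfl; exact hirr _ h
        refine hav z c2 b c1 y (hsymm _ _ hz.1) (hsymm _ _ a2) a1 ay (nadj hz.1).symm ?_ hz'.2 hz'.1
          (nadj a2).symm hc12.symm hyc.symm (nadj a1) ?_ (nadj ay) ?_ ry ?_
        · rintro rfl
          have := rsymm c2 z
          omega
        · rintro rfl
          have := rsymm c1 b
          omega
        · rw [rsymm z c2]; omega
        · rw [rsymm c2 b]; exact hlt12
      exact sepLv_B (q1.trans f1) hg (q2.trans f1) hlt12 s1 s2 sy
    rw [Finset.card_le_one]
    rintro ⟨b1, c1⟩ h1 ⟨b2, c2⟩ h2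
    simp only [DB, D, Finset.mem_filter, Finset.mem_univ, true_and, Prod.mk.injEq] at h1 h2
    obtain ⟨⟨⟨a1, q1⟩, f1, g1⟩, rfl, s1⟩ := h1
    obtain ⟨⟨⟨a2, q2⟩, f2, g2⟩, rfl, s2⟩ := h2
    rcases lt_trichotomy (r b2 c1) (r b2 c2) with h | h | h
    · exact (main c1 c2 a1 a2 q1 q2 f1 f2 s1 s2 g1 h).elim
    · rw [hinj _ _ _ a1 a2 h]
    · exact (main c2 c1 a2 a1 q2 q1 f2 f1 s2 s1 g2 h).elim
  have h1 := Finset.card_le_card hD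
  have h2 := Finset.card_union_le D0 (DA ∪ DB)
  have h3 := Finset.card_union_le DA DB
  rw [hT] at cA cB
  rw [Finset.card_univ] at c0
  nlinarith

theorem P5_adj_cases {a b : Fin 5} (h : P5_1432.graph.Adj a b) :
    s(a, b) = s((0 : Fin 5), 1) ∨ s(a, b) = s((1 : Fin 5), 2) ∨ s(a, b) = s((2 : Fin 5), 3) ∨
      s(a, b) = s((3 : Fin 5), 4) := by
  have h' : (a : ℕ) + 1 = b ∨ (b : ℕ) + 1 = a := by
    have := (SimpleGraph.fromRel_adj _ _ _).1 h
    exact this.2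
  clear h
  revert a b
  decide

/-- The label function of `P5_1432`, with its type unfolded. -/
def P5lab : Sym2 (Fin 5) → ℕ := P5_1432.label

theorem P5_label01 : P5lab s(0, 1) = 1 := rfl
theorem P5_label12 : P5lab s(1, 2) = 4 := rfl
theorem P5_label23 : P5lab s(2, 3) = 3 := rfl
theorem P5_label34 : P5lab s(3, 4) = 2 := rfl
theorem P5_adj_succ (a b : Fin 5) (h : (a : ℕ) + 1 = b) : P5_1432.graph.Adj a b := by
  refine (SimpleGraph.fromRel_adj _ _ _).2 ⟨?_, Or.inl h⟩
  intro h'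
  have h2 : a = b := h'
  rw [h2] at h
  omega

theorem P5_adj01 : P5_1432.graph.Adj (0 : Fin 5) (1 : Fin 5) := P5_adj_succ 0 1 rfl
theorem P5_adj12 : P5_1432.graph.Adj (1 : Fin 5) (2 : Fin 5) := P5_adj_succ 1 2 rfl
theorem P5_adj23 : P5_1432.graph.Adj (2 : Fin 5) (3 : Fin 5) := P5_adj_succ 2 3 rfl
theorem P5_adj34 : P5_1432.graph.Adj (3 : Fin 5) (4 : Fin 5) := P5_adj_succ 3 4 rfl

theorem contains_P5 (G : EOGraph) (z x b c y : Fin G.nv)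
    (h1 : G.graph.Adj z x) (h2 : G.graph.Adj x b) (h3 : G.graph.Adj b c) (h4 : G.graph.Adj c y)
    (n1 : z ≠ x) (n2 : z ≠ b) (n3 : z ≠ c) (n4 : z ≠ y) (n5 : x ≠ b) (n6 : x ≠ c) (n7 : x ≠ y)
    (n8 : b ≠ c) (n9 : b ≠ y) (n10 : c ≠ y)
    (l1 : G.label s(z, x) < G.label s(c, y)) (l2 : G.label s(c, y) < G.label s(b, c))
    (l3 : G.label s(b, c) < G.label s(x, b)) : G.Contains P5_1432 := by
  let g : Fin 5 → Fin G.nv := ![z, x, b, c, y]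
  have hg : Function.Injective g := by
    intro i j hij
    fin_cases i <;> fin_cases j <;> simp_all [g]
  have key : ∀ i j : Fin 5, P5_1432.graph.Adj i j → ∃ e : Sym2 (Fin 5),
      e = s(i, j) ∧ G.graph.Adj (g i) (g j) ∧
      ((P5lab s(i, j) = 1 ∧ s(g i, g j) = s(z, x)) ∨
       (P5lab s(i, j) = 4 ∧ s(g i, g j) = s(x, b)) ∨
       (P5lab s(i, j) = 3 ∧ s(g i, g j) = s(b, c)) ∨
       (P5lab s(i, j) = 2 ∧ s(g i, g j) = s(c, y))) := by
    intro i j h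
    refine ⟨_, rfl, ?_⟩
    have hmap : ∀ i' j' : Fin 5, s(i, j) = s(i', j') → s(g i, g j) = s(g i', g j') := by
      intro i' j' h
      have := congrArg (Sym2.map g) h
      simpa using this
    have hadj : ∀ u v, G.graph.Adj u v → s(g i, g j) = s(u, v) → G.graph.Adj (g i) (g j) := by
      intro u v huv h
      rw [← SimpleGraph.mem_edgeSet, h]; exact huv
    rcases P5_adj_cases h with e | e | e | e
    · exact ⟨hadj _ _ h1 (hmap _ _ e), Or.inl ⟨by rw [e]; rfl, hmap _ _ e⟩⟩
    · exact ⟨hadj _ _ h2 (hmap _ _ e), Or.inr (Or.inl ⟨by rw [e]; rfl, hmap _ _ e⟩)⟩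
    · exact ⟨hadj _ _ h3 (hmap _ _ e), Or.inr (Or.inr (Or.inl ⟨by rw [e]; rfl, hmap _ _ e⟩))⟩
    · exact ⟨hadj _ _ h4 (hmap _ _ e), Or.inr (Or.inr (Or.inr ⟨by rw [e]; rfl, hmap _ _ e⟩))⟩
  refine ⟨⟨g, hg⟩, ?_, ?_⟩
  · intro i j h
    obtain ⟨_, _, h', _⟩ := key i j h
    exact h'
  · intro i j i' j' h h'
    obtain ⟨_, _, _, k1⟩ := key i j h
    obtain ⟨_, _, _, k2⟩ := key i' j' h'
    show P5lab s(i, j) < P5lab s(i', j') ↔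
      G.label s(g i, g j) < G.label s(g i', g j')
    rcases k1 with ⟨k, e⟩ | ⟨k, e⟩ | ⟨k, e⟩ | ⟨k, e⟩ <;>
    rcases k2 with ⟨k', e'⟩ | ⟨k', e'⟩ | ⟨k', e'⟩ | ⟨k', e'⟩ <;>
    rw [k, k', e, e'] <;> omega

theorem of_contains_P5 (G : EOGraph) (h : G.Contains P5_1432) :
    ∃ f : Fin 5 → Fin G.nv, Function.Injective f ∧
    G.graph.Adj (f 0) (f 1) ∧ G.graph.Adj (f 1) (f 2) ∧ G.graph.Adj (f 2) (f 3) ∧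
    G.graph.Adj (f 3) (f 4) ∧ G.label s(f 0, f 1) < G.label s(f 3, f 4) ∧
    G.label s(f 3, f 4) < G.label s(f 2, f 3) ∧ G.label s(f 2, f 3) < G.label s(f 1, f 2) := by
  obtain ⟨f, ha, hl⟩ := h
  refine ⟨f, f.injective, ha _ _ P5_adj01, ha _ _ P5_adj12, ha _ _ P5_adj23, ha _ _ P5_adj34,
    (hl _ _ _ _ P5_adj01 P5_adj34).1 ?_, (hl _ _ _ _ P5_adj34 P5_adj23).1 ?_,
    (hl _ _ _ _ P5_adj23 P5_adj12).1 ?_⟩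
  · show P5lab s((0 : Fin 5), 1) < P5lab s((3 : Fin 5), 4)
    rw [P5_label01, P5_label34]; omega
  · show P5lab s((3 : Fin 5), 4) < P5lab s((2 : Fin 5), 3)
    rw [P5_label34, P5_label23]; omega
  · show P5lab s((2 : Fin 5), 3) < P5lab s((1 : Fin 5), 2)
    rw [P5_label23, P5_label12]; omega

open Classical in
theorem upper_bound (G : EOGraph) (hv : G.Valid) (hav : G.Avoids P5_1432) :
    G.edges ≤ 3 * G.nv * (2 * (Nat.log 2 G.nv + 1) + 2) := by
  let E : Finset (Sym2 (Fin G.nv)) := G.graph.edgeFinset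
  let rk : Sym2 (Fin G.nv) → ℕ := fun e => (E.filter fun f => G.label f < G.label e).card
  have hmono : ∀ e ∈ E, ∀ f ∈ E, G.label e < G.label f → rk e < rk f := by
    intro e he f hf hlt
    apply Finset.card_lt_card
    rw [Finset.ssubset_iff_of_subset]
    · exact ⟨e, by simp [he, hlt], by simp⟩
    · intro g hg
      simp only [Finset.mem_filter] at hg ⊢
      exact ⟨hg.1, hg.2.trans hlt⟩
  have hmono' : ∀ e ∈ E, ∀ f ∈ E, rk e < rk f → G.label e < G.label f := by
    intro e he f hf h
    by_contra hcon
    push Not at hcon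
    rcases hcon.lt_or_eq with h' | h'
    · have := hmono f hf e he h'; omega
    · have : f = e := hv f (by simpa [E] using hf) e (by simpa [E] using he) h'
      subst this; omega
  have hE : ∀ x y, G.graph.Adj x y → s(x, y) ∈ E := by
    intro x y h; simpa [E] using h
  have hcard : E.card ≤ G.nv ^ 2 := by
    have h1 := G.graph.card_edgeFinset_le_card_choose_two
    have h2 := Nat.choose_le_pow G.nv 2
    simp only [Fintype.card_fin] at h1
    exact h1.trans h2
  have hc : ∃ D : Finset (Fin G.nv × Fin G.nv),
      (∀ x y, G.graph.Adj x y → (x, y) ∈ D ∨ (y, x) ∈ D) ∧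
      D.card ≤ 3 * Fintype.card (Fin G.nv) * (2 * (Nat.log 2 G.nv + 1) + 2) := by
    refine core_bound (V := Fin G.nv) G.graph.Adj (fun x y => rk s(x, y))
      (2 * (Nat.log 2 G.nv + 1)) ?_ (fun _ _ h => h.symm) (fun x h => G.graph.irrefl h)
      (fun x y => by simp only [Sym2.eq_swap]) ?_ ?_
    · intro b x y hx hy h
      have h1 : s(b, x) = s(b, y) := by
        apply hv _ hx _ hy
        rcases lt_trichotomy (G.label s(b, x)) (G.label s(b, y)) with h' | h' | h'
        · have := hmono _ (hE _ _ hx) _ (hE _ _ hy) h'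
          omega
        · exact h'
        · have := hmono _ (hE _ _ hy) _ (hE _ _ hx) h'
          omega
      exact Sym2.congr_right.1 h1
    · intro x y hxy
      have h1 : rk s(x, y) ≤ E.card := Finset.card_filter_le _ _
      have h2 : G.nv < 2 ^ (Nat.log 2 G.nv + 1) := Nat.lt_pow_succ_log_self (by norm_num) _
      show rk s(x, y) < _
      rw [mul_comm 2, pow_mul]
      have := Nat.pow_lt_pow_left h2 (n := 2) (by norm_num)
      omega
    · intro z x b c y h1 h2 h3 h4 n1 n2 n3 n4 n5 n6 n7 n8 n9 n10 l1 l2 l3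
      exact hav (contains_P5 G z x b c y h1 h2 h3 h4 n1 n2 n3 n4 n5 n6 n7 n8 n9 n10
        (hmono' _ (hE _ _ h1) _ (hE _ _ h4) l1) (hmono' _ (hE _ _ h4) _ (hE _ _ h3) l2)
        (hmono' _ (hE _ _ h3) _ (hE _ _ h2) l3))
  obtain ⟨D, hD, hDc⟩ := hc
  have : E ⊆ D.image (fun p => s(p.1, p.2)) := by
    intro e
    induction e using Sym2.ind with
    | _ x y =>
      intro h
      rw [Finset.mem_image]
      rcases hD x y (by simpa [E] using h) with h | h
      · exact ⟨_, h, rfl⟩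
      · exact ⟨_, h, Sym2.eq_swap⟩
  have h1 := (Finset.card_le_card this).trans Finset.card_image_le
  rw [Fintype.card_fin] at hDc
  have h2 : G.edges = E.card := by
    unfold EOGraph.edges
    rw [← SimpleGraph.coe_edgeFinset, Set.ncard_coe_finset]
  omega

/-- The directed relation of the lower-bound construction. -/
def lowRel (n : ℕ) (u v : Fin n) : Prop :=
  (u : ℕ) < n / 2 ∧ n / 2 ≤ (v : ℕ) ∧ ∃ k : ℕ, (v : ℕ) + 1 = n / 2 + u + 2 ^ k

/-- The edge-ordered graph of the lower bound. -/
def lowG (n : ℕ) : EOGraph where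
  nv := n
  graph := SimpleGraph.fromRel (lowRel n)
  label := symLabel fun a b => n * n + n - ((a : ℕ) * n + b)

/-- The label function of `lowG`, with its type unfolded. -/
def lowLab (n : ℕ) : Sym2 (Fin n) → ℕ := (lowG n).label

theorem lowG_adj {n : ℕ} {u v : Fin n} : (lowG n).graph.Adj u v ↔ (lowRel n u v ∨ lowRel n v u) := by
  show (SimpleGraph.fromRel (lowRel n)).Adj u v ↔ _
  rw [SimpleGraph.fromRel_adj]
  refine ⟨fun h => h.2, fun h => ⟨?_, h⟩⟩
  rintro rfl
  rcases h with ⟨h1, h2, _⟩ | ⟨h1, h2, _⟩ <;> omega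

theorem lowG_label {n : ℕ} {u v : Fin n} (h : lowRel n u v) :
    lowLab n s(u, v) = n * n + n - ((u : ℕ) * n + v) := by
  have huv : u ≤ v := by
    rw [Fin.le_def]; have := h.1; have := h.2.1; omega
  show n * n + n - (((min u v : Fin n) : ℕ) * n + ((max u v : Fin n) : ℕ)) = _
  rw [min_eq_left huv, max_eq_right huv]

theorem lex_lt {n a b c d : ℕ} (ha : a < n) (hb : b < n) (hc : c < n) (hd : d < n)
    (h : n * n + n - (a * n + b) < n * n + n - (c * n + d)) : c < a ∨ (c = a ∧ d < b) := by
  rcases lt_trichotomy c a with h1 | h1 | h1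
  · exact Or.inl h1
  · subst h1; right; constructor
    · rfl
    · omega
  · have h2 : (a + 1) * n ≤ c * n := Nat.mul_le_mul_right n h1
    have h3 : (c + 1) * n ≤ n * n := Nat.mul_le_mul_right n hc
    rw [add_mul] at h2 h3
    omega

theorem lex_eq {n a b c d : ℕ} (ha : a < n) (hb : b < n) (hc : c < n) (hd : d < n)
    (h : n * n + n - (a * n + b) = n * n + n - (c * n + d)) : a = c ∧ b = d := by
  have h3 : (c + 1) * n ≤ n * n := Nat.mul_le_mul_right n hc
  have h4 : (a + 1) * n ≤ n * n := Nat.mul_le_mul_right n ha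
  rw [add_mul] at h3 h4
  rcases lt_trichotomy c a with h1 | h1 | h1
  · have h2 : (c + 1) * n ≤ a * n := Nat.mul_le_mul_right n h1
    rw [add_mul] at h2
    omega
  · subst h1; omega
  · have h2 : (a + 1) * n ≤ c * n := Nat.mul_le_mul_right n h1
    rw [add_mul] at h2
    omega

theorem lowG_valid (n : ℕ) : (lowG n).Valid := by
  have norm : ∀ e ∈ (lowG n).graph.edgeSet, ∃ u v : Fin n, lowRel n u v ∧ e = s(u, v) := by
    intro e
    induction e using Sym2.ind with
    | _ x y =>
      intro h
      rcases lowG_adj.1 h with h | h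
      · exact ⟨x, y, h, rfl⟩
      · exact ⟨y, x, h, Sym2.eq_swap⟩
  intro e he f hf h
  obtain ⟨u, v, huv, rfl⟩ := norm e he
  obtain ⟨u', v', huv', rfl⟩ := norm f hf
  change lowLab n s(u, v) = lowLab n s(u', v') at h
  rw [lowG_label huv, lowG_label huv'] at h
  obtain ⟨h1, h2⟩ := lex_eq u.2 v.2 u'.2 v'.2 h
  rw [Fin.ext h1, Fin.ext h2]

theorem pow_two_lt {i j : ℕ} (h : 2 ^ i < 2 ^ j) : 2 * 2 ^ i ≤ 2 ^ j := by
  have := (Nat.pow_lt_pow_iff_right (a := 2) (by norm_num)).1 h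
  calc 2 * 2 ^ i = 2 ^ (i + 1) := by ring
    _ ≤ 2 ^ j := Nat.pow_le_pow_right (by norm_num) this

theorem lowG_avoids (n : ℕ) : (lowG n).Avoids P5_1432 := by
  intro h
  obtain ⟨f, hf, a01, a12, a23, a34, l1, l2, l3⟩ := of_contains_P5 _ h
  change Fin 5 → Fin n at f
  change lowLab n s(f 0, f 1) < lowLab n s(f 3, f 4) at l1
  change lowLab n s(f 3, f 4) < lowLab n s(f 2, f 3) at l2
  change lowLab n s(f 2, f 3) < lowLab n s(f 1, f 2) at l3
  rcases lowG_adj.1 a01 with r01 | r01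
  · have r12 : lowRel n (f 2) (f 1) := by
      rcases lowG_adj.1 a12 with r | r
      · have := r01.2.1; have := r.1; omega
      · exact r
    have r23 : lowRel n (f 2) (f 3) := by
      rcases lowG_adj.1 a23 with r | r
      · exact r
      · have := r12.1; have := r.2.1; omega
    have r34 : lowRel n (f 4) (f 3) := by
      rcases lowG_adj.1 a34 with r | r
      · have := r23.2.1; have := r.1; omega
      · exact r
    rw [Sym2.eq_swap (a := f 3), lowG_label r01, lowG_label r34] at l1
    rw [Sym2.eq_swap (a := f 3), lowG_label r34, lowG_label r23] at l2
    rw [Sym2.eq_swap (a := f 1), lowG_label r12, lowG_label r23] at l3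
    have m1 := lex_lt (f 0).2 (f 1).2 (f 4).2 (f 3).2 l1
    have m2 := lex_lt (f 4).2 (f 3).2 (f 2).2 (f 3).2 l2
    have m3 := lex_lt (f 2).2 (f 3).2 (f 2).2 (f 1).2 l3
    obtain ⟨_, _, l, hl⟩ := r01
    obtain ⟨_, _, k, hk⟩ := r12
    obtain ⟨_, _, i, hi⟩ := r23
    obtain ⟨_, _, j, hj⟩ := r34
    have p1 : 2 * 2 ^ k ≤ 2 ^ i := pow_two_lt (by omega)
    have p2 : 2 * 2 ^ j ≤ 2 ^ i := pow_two_lt (by omega)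
    have p3 : 0 < 2 ^ l := by positivity
    omega
  · have r12 : lowRel n (f 1) (f 2) := by
      rcases lowG_adj.1 a12 with r | r
      · exact r
      · have := r01.1; have := r.2.1; omega
    have r23 : lowRel n (f 3) (f 2) := by
      rcases lowG_adj.1 a23 with r | r
      · have := r12.2.1; have := r.1; omega
      · exact r
    have r34 : lowRel n (f 3) (f 4) := by
      rcases lowG_adj.1 a34 with r | r
      · exact r
      · have := r23.1; have := r.2.1; omega
    rw [Sym2.eq_swap (a := f 0), lowG_label r01, lowG_label r34] at l1
    rw [Sym2.eq_swap (a := f 2), lowG_label r34, lowG_label r23] at l2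
    rw [Sym2.eq_swap (a := f 2), lowG_label r12, lowG_label r23] at l3
    have m1 := lex_lt (f 1).2 (f 0).2 (f 3).2 (f 4).2 l1
    have m3 := lex_lt (f 3).2 (f 2).2 (f 1).2 (f 2).2 l3
    have : f 1 ≠ f 3 := fun h => absurd (hf h) (by decide)
    have : (f 1 : ℕ) ≠ f 3 := fun h => this (Fin.ext h)
    omega

theorem lowG_edges (n : ℕ) (hn : 2 ≤ n) :
    (n / 2 / 2 + 1) * (Nat.log 2 (n - n / 2 - n / 2 / 2) + 1) ≤ (lowG n).edges := by
  set K := Nat.log 2 (n - n / 2 - n / 2 / 2) + 1 with hK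
  have hpow : ∀ k < K, 2 ^ k ≤ n - n / 2 - n / 2 / 2 := by
    intro k hk
    exact Nat.pow_le_of_le_log (by omega) (by omega)
  have hpos : ∀ k : ℕ, 0 < 2 ^ k := fun k => by positivity
  let S := (Finset.univ : Finset (Fin (n / 2 / 2 + 1) × Fin K))
  have hS : S.card = (n / 2 / 2 + 1) * K := by simp [S]
  let F : Fin (n / 2 / 2 + 1) × Fin K → Sym2 (Fin n) := fun p =>
    s(⟨p.1, by have := p.1.2; omega⟩, ⟨n / 2 + p.1 + 2 ^ (p.2 : ℕ) - 1, by
      have := p.1.2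
      have := hpow p.2 p.2.2
      have := hpos p.2
      omega⟩)
  have hFinj : Function.Injective F := by
    rintro ⟨u, k⟩ ⟨u', k'⟩ h
    have := hpos k
    have := hpos k'
    simp only [F, Sym2.eq_iff, Fin.mk.injEq] at h
    have hu := u.2
    have hu' := u'.2
    have h1 : (u : ℕ) = u' ∧ 2 ^ (k : ℕ) = 2 ^ (k' : ℕ) := by omega
    have h2 := Nat.pow_right_injective (le_refl 2) h1.2
    rw [Fin.ext h1.1, Fin.ext h2]
  rw [← hS, ← Finset.card_image_of_injective S hFinj, ← Set.ncard_coe_finset]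
  apply Set.ncard_le_ncard
  · intro e he
    rw [Finset.mem_coe, Finset.mem_image] at he
    obtain ⟨⟨u, k⟩, _, rfl⟩ := he
    refine lowG_adj.2 (Or.inl ⟨?_, ?_, k, ?_⟩)
    · have := u.2
      show (u : ℕ) < n / 2
      omega
    · have := hpos k
      show n / 2 ≤ n / 2 + u + 2 ^ (k : ℕ) - 1
      omega
    · have := hpos k
      show n / 2 + u + 2 ^ (k : ℕ) - 1 + 1 = n / 2 + u + 2 ^ (k : ℕ)
      omega
  · exact Set.toFinite (α := Sym2 (Fin n)) _

/-- `lex(n, P_5^{1432}) = Θ(n log n)`. -/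
theorem lex_P5_1432 :
    ∃ c C : ℝ, 0 < c ∧ 0 < C ∧ ∀ n : ℕ, 2 ≤ n →
      c * (n : ℝ) * Real.logb 2 (n : ℝ) ≤ (lexFam n {P5_1432} : ℝ) ∧
      (lexFam n {P5_1432} : ℝ) ≤ C * (n : ℝ) * Real.logb 2 (n : ℝ) := by

  have hub : ∀ n : ℕ, ∀ m ∈ {m : ℕ | ∃ G : EOGraph, G.nv = n ∧ G.Valid ∧ G.AvoidsFam {P5_1432} ∧
      G.edges = m}, m ≤ 3 * n * (2 * (Nat.log 2 n + 1) + 2) := by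
    rintro n m ⟨G, rfl, hv, ha, rfl⟩
    exact upper_bound G hv (ha _ rfl)
  refine ⟨1 / 12, 18, by norm_num, by norm_num, ?_⟩
  intro n hn
  have hn0 : (0 : ℝ) < n := by positivity
  constructor
  · have h1 : (lowG n).edges ≤ lexFam n {P5_1432} := by
      apply le_csSup ⟨_, hub n⟩
      refine ⟨lowG n, rfl, lowG_valid n, ?_, rfl⟩
      rintro H rfl
      exact lowG_avoids n
    have h2 := (lowG_edges n hn).trans h1
    set K := Nat.log 2 (n - n / 2 - n / 2 / 2) + 1 with hK
    have h3 : n - n / 2 - n / 2 / 2 < 2 ^ K := Nat.lt_pow_succ_log_self (by norm_num) _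
    have h4 : n ≤ 2 ^ (K + 2) := by
      rw [pow_add]; omega
    have h5 : Real.logb 2 n ≤ K + 2 := by
      rw [Real.logb_le_iff_le_rpow (by norm_num) hn0]
      have : (n : ℝ) ≤ (2 : ℝ) ^ (K + 2) := by exact_mod_cast h4
      exact_mod_cast this
    have h6 : (1 : ℝ) ≤ K := by
      have : 1 ≤ K := by omega
      exact_mod_cast this
    have h7 : (n : ℝ) ≤ 4 * ((n / 2 / 2 + 1 : ℕ) : ℝ) := by
      have : n ≤ 4 * (n / 2 / 2 + 1) := by omega
      exact_mod_cast this
    have h8 : ((n / 2 / 2 + 1 : ℕ) : ℝ) * (K : ℝ) ≤ (lexFam n {P5_1432} : ℝ) := by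
      exact_mod_cast h2
    refine le_trans ?_ h8
    have h9 : (n : ℝ) * Real.logb 2 n ≤ (4 * ((n / 2 / 2 + 1 : ℕ) : ℝ)) * (3 * K) := by
      apply mul_le_mul h7 (by linarith) _ (by positivity)
      exact Real.logb_nonneg (by norm_num) (by exact_mod_cast (by omega : 1 ≤ n))
    linarith
  · have h1 : lexFam n {P5_1432} ≤ 3 * n * (2 * (Nat.log 2 n + 1) + 2) := csSup_le' (hub n)
    have h2 : (lexFam n {P5_1432} : ℝ) ≤ 3 * n * (2 * (Nat.log 2 n + 1) + 2) := by
      exact_mod_cast h1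
    refine h2.trans ?_
    have h3 : (Nat.log 2 n : ℝ) ≤ Real.logb 2 n := by
      rw [Real.le_logb_iff_rpow_le (by norm_num) hn0]
      have : 2 ^ (Nat.log 2 n) ≤ n := Nat.pow_log_le_self 2 (by omega)
      have : (2 : ℝ) ^ (Nat.log 2 n) ≤ n := by exact_mod_cast this
      exact_mod_cast this
    have h4 : (1 : ℝ) ≤ Real.logb 2 n := by
      rw [Real.le_logb_iff_rpow_le (by norm_num) hn0]
      have : (2 : ℝ) ≤ n := by exact_mod_cast hn
      simpa using this
    nlinarith
end
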